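/- arXiv:1503.06243 — 3 statements merged into one kernel-verified Lean document; each statement's English description precedes it below -/
import Mathlib

section
/- For n ≥ 4 and 0 ≤ d ≤ n-3, the number of ways to choose d pairwise non-crossing diagonals in a convex n-gon equals (1/(n+d)) · C(n+d, d+1) · C(n-3, d). -/
/-- Cyclic adjacency of vertices `i, j` of the `n`-gon (labeled `0, …, n-1` in cyclic order). -/
def cycAdj (n : ℕ) (i j : Fin n) : Prop :=
  (i.val + 1) % n = j.val ∨ (j.val + 1) % n = i.val

/-- `p` is a diagonal of the convex `n`-gon: a pair of distinct non-adjacent vertices. -/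
def IsDiagonal (n : ℕ) (p : Finset (Fin n)) : Prop :=
  ∃ i j : Fin n, i ≠ j ∧ ¬ cycAdj n i j ∧ p = {i, j}

/-- Two chords of the convex `n`-gon cross (intersect in their interiors):
the endpoints interlace along the boundary. -/
def Cross (n : ℕ) (p q : Finset (Fin n)) : Prop :=
  ∃ a b c d : Fin n, a < c ∧ c < b ∧ b < d ∧
    ((p = {a, b} ∧ q = {c, d}) ∨ (p = {c, d} ∧ q = {a, b}))

open Finset Polynomial

/-- A family of pairwise non-crossing arcs `(i, j)`, `i + 2 ≤ j ≤ N`, on the points `0, …, N`. -/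
def IsArcSystem (N : ℕ) (S : Finset (ℕ × ℕ)) : Prop :=
  (∀ p ∈ S, p.1 + 2 ≤ p.2 ∧ p.2 ≤ N) ∧
    ∀ p ∈ S, ∀ q ∈ S, ¬ (p.1 < q.1 ∧ q.1 < p.2 ∧ p.2 < q.2)

open scoped Classical in
/-- All arc systems on `0, …, N`. -/
noncomputable def arcSystems (N : ℕ) : Finset (Finset (ℕ × ℕ)) :=
  ((range (N + 1) ×ˢ range (N + 1)).powerset).filter (IsArcSystem N)

/-- The points of `0, …, N` lying strictly below no arc of `S`. -/
def visible (N : ℕ) (S : Finset (ℕ × ℕ)) : Finset ℕ :=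
  (range (N + 1)).filter fun v => ∀ p ∈ S, ¬ (p.1 < v ∧ v < p.2)

theorem mem_arcSystems {N : ℕ} {S : Finset (ℕ × ℕ)} : S ∈ arcSystems N ↔ IsArcSystem N S := by
  simp only [arcSystems, mem_filter, mem_powerset, and_iff_right_iff_imp]
  intro h p hp
  have := h.1 p hp
  simp only [mem_product, mem_range]
  omega

theorem mem_visible {N : ℕ} {S : Finset (ℕ × ℕ)} {v : ℕ} :
    v ∈ visible N S ↔ v ≤ N ∧ ∀ p ∈ S, ¬ (p.1 < v ∧ v < p.2) := by
  simp [visible]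

theorem zero_mem_visible (N : ℕ) (S : Finset (ℕ × ℕ)) : 0 ∈ visible N S := by
  simp [mem_visible]

theorem self_mem_visible {N : ℕ} {S : Finset (ℕ × ℕ)} (h : IsArcSystem N S) :
    N ∈ visible N S := by
  rw [mem_visible]
  refine ⟨le_rfl, fun p hp => ?_⟩
  have := h.1 p hp
  omega

/-- The arcs joining the points of `B` to the point `M`. -/
def fan (M : ℕ) (B : Finset ℕ) : Finset (ℕ × ℕ) := B.image fun b => (b, M)

theorem mem_fan {M : ℕ} {B : Finset ℕ} {p : ℕ × ℕ} : p ∈ fan M B ↔ p.1 ∈ B ∧ p.2 = M := by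
  obtain ⟨a, b⟩ := p
  simp only [fan, mem_image, Prod.mk.injEq]
  constructor
  · rintro ⟨x, hx, rfl, rfl⟩
    exact ⟨hx, rfl⟩
  · rintro ⟨hx, rfl⟩
    exact ⟨a, hx, rfl, rfl⟩

theorem card_fan (M : ℕ) (B : Finset ℕ) : (fan M B).card = B.card :=
  card_image_of_injective _ fun _ _ h => (Prod.mk.inj h).1

theorem IsArcSystem.union_fan {N : ℕ} {C : Finset (ℕ × ℕ)} {B : Finset ℕ} (hC : IsArcSystem N C)
    (hB : B ⊆ (visible N C).erase N) : IsArcSystem (N + 1) (C ∪ fan (N + 1) B) := by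
  have hB' : ∀ b ∈ B, b < N ∧ ∀ p ∈ C, ¬ (p.1 < b ∧ b < p.2) := fun b hb => by
    have h := hB hb
    rw [mem_erase, mem_visible] at h
    exact ⟨by omega, h.2.2⟩
  simp only [IsArcSystem, mem_union, mem_fan]
  constructor
  · rintro p (hp | hp)
    · have := hC.1 p hp
      omega
    · have := (hB' _ hp.1).1
      omega
  · rintro p (hp | hp) q (hq | hq)
    · exact hC.2 p hp q hq
    · have := (hB' _ hq.1).2 p hp
      omega
    · have := hC.1 q hq
      omega
    · omega

theorem visible_union_fan {N : ℕ} {C : Finset (ℕ × ℕ)} (hC : IsArcSystem N C) (B : Finset ℕ) :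
    visible (N + 1) (C ∪ fan (N + 1) B) =
      insert (N + 1) ((visible N C).filter fun v => ∀ b ∈ B, v ≤ b) := by
  ext v
  simp only [mem_visible, mem_insert, mem_filter, mem_union, mem_fan]
  constructor
  · rintro ⟨hv, h⟩
    by_cases hvN : v = N + 1
    · exact Or.inl hvN
    · refine Or.inr ⟨⟨by omega, fun p hp => h p (Or.inl hp)⟩, fun b hb => ?_⟩
      have := h (b, N + 1) (Or.inr ⟨hb, rfl⟩)
      simp only at this
      omega
  · rintro (rfl | ⟨⟨hv, h⟩, hb⟩)
    · refine ⟨le_rfl, ?_⟩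
      rintro p (hp | hp)
      · have := hC.1 p hp
        omega
      · omega
    · refine ⟨by omega, ?_⟩
      rintro p (hp | hp)
      · exact h p hp
      · have := hb _ hp.1
        omega

/-- An arc system on `0, …, N + 1` is an arc system on `0, …, N` together with a set of visible
points to be joined to `N + 1`. -/
theorem sum_arcSystems_succ {M : Type*} [AddCommMonoid M] (N : ℕ) (f : Finset (ℕ × ℕ) → M) :
    ∑ S ∈ arcSystems (N + 1), f S =
      ∑ C ∈ arcSystems N, ∑ B ∈ ((visible N C).erase N).powerset, f (C ∪ fan (N + 1) B) := by
  rw [Finset.sum_sigma']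
  symm
  refine sum_bij' (fun x _ => x.1 ∪ fan (N + 1) x.2)
    (fun S _ => ⟨S.filter fun p => p.2 ≤ N, (S.filter fun p => p.2 = N + 1).image Prod.fst⟩)
    ?_ ?_ ?_ ?_ ?_
  · rintro ⟨C, B⟩ h
    simp only [mem_sigma, mem_powerset, mem_arcSystems] at h
    exact mem_arcSystems.2 (h.1.union_fan h.2)
  · intro S hS
    rw [mem_arcSystems] at hS
    simp only [mem_sigma, mem_powerset, mem_arcSystems]
    refine ⟨⟨fun p hp => ?_, fun p hp q hq => ?_⟩, fun b hb => ?_⟩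
    · rw [mem_filter] at hp
      exact ⟨(hS.1 p hp.1).1, hp.2⟩
    · exact hS.2 p (mem_filter.1 hp).1 q (mem_filter.1 hq).1
    · simp only [mem_image, mem_filter] at hb
      obtain ⟨p, ⟨hp, hpN⟩, rfl⟩ := hb
      have hp1 := hS.1 p hp
      simp only [mem_erase, mem_visible, mem_filter]
      refine ⟨by omega, by omega, fun q hq => ?_⟩
      have := hS.2 q hq.1 p hp
      omega
  · rintro ⟨C, B⟩ h
    simp only [mem_sigma, mem_powerset, mem_arcSystems] at h
    have hC : ∀ p ∈ C, p.2 ≤ N := fun p hp => (h.1.1 p hp).2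
    congr 1
    · ext p
      simp only [mem_filter, mem_union, mem_fan]
      constructor
      · rintro ⟨hp | hp, hN⟩
        · exact hp
        · omega
      · exact fun hp => ⟨Or.inl hp, hC p hp⟩
    · ext b
      simp only [mem_image, mem_filter, mem_union, mem_fan]
      constructor
      · rintro ⟨p, ⟨hp | hp, hN⟩, rfl⟩
        · have := hC p hp
          omega
        · exact hp.1
      · exact fun hb => ⟨(b, N + 1), ⟨Or.inr ⟨hb, rfl⟩, rfl⟩, rfl⟩
  · intro S hS
    rw [mem_arcSystems] at hS
    ext p
    simp only [mem_filter, mem_union, mem_fan, mem_image]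
    constructor
    · rintro (hp | ⟨⟨q, ⟨hq, hqN⟩, hqp⟩, hN⟩)
      · exact hp.1
      · rwa [← Prod.ext hqp (hqN.trans hN.symm)]
    · intro hp
      have := (hS.1 p hp).2
      by_cases hN : p.2 ≤ N
      · exact Or.inl ⟨hp, hN⟩
      · exact Or.inr ⟨⟨p, ⟨hp, by omega⟩, rfl⟩, by omega⟩
  · intros
    rfl

/-- The weight with which an arc system with `t + 1` visible points contributes to those with one
more point and `r + 2` visible points. -/
noncomputable def transferWeight (t r : ℕ) : ℚ[X] :=
  if r = t then 1 else if r < t then X * (1 + X) ^ (t - r - 1) else 0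

theorem sum_powerset_transferWeight (N : ℕ) (V : Finset ℕ) (hV : ∀ v ∈ V, v < N) (r : ℕ) :
    (∑ B ∈ V.powerset,
      if ((insert N V).filter fun v => ∀ b ∈ B, v ≤ b).card = r + 1
        then (X : ℚ[X]) ^ B.card else 0) = transferWeight V.card r := by
  induction V using Finset.induction_on_min generalizing r with
  | empty => simp [transferWeight, filter_singleton, eq_comm]
  | insert a s ha ih =>
    have has : a ∉ s := fun h => lt_irrefl _ (ha a h)
    have haN : a < N := hV a (mem_insert_self _ _)
    have hs : ∀ v ∈ s, v < N := fun v hv => hV v (mem_insert_of_mem hv)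
    rw [sum_powerset_insert has, card_insert_of_notMem has]
    have h1 : ∀ B ∈ s.powerset,
        ((insert N (insert a s)).filter fun v => ∀ b ∈ B, v ≤ b).card =
          ((insert N s).filter fun v => ∀ b ∈ B, v ≤ b).card + 1 := by
      intro B hB
      rw [mem_powerset] at hB
      rw [insert_comm, filter_insert, if_pos fun b hb => (ha b (hB hb)).le,
        card_insert_of_notMem]
      simp [has, haN.ne]
    have h2 : ∀ B ∈ s.powerset,
        ((insert N (insert a s)).filter fun v => ∀ b ∈ insert a B, v ≤ b).card = 1 := by
      intro B hB
      rw [mem_powerset] at hB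
      rw [card_eq_one]
      refine ⟨a, ?_⟩
      ext v
      simp only [mem_filter, mem_insert, mem_singleton, forall_eq_or_imp]
      constructor
      · rintro ⟨rfl | rfl | hv, hva, -⟩
        · omega
        · rfl
        · have := ha v hv
          omega
      · rintro rfl
        exact ⟨Or.inr (Or.inl rfl), le_rfl, fun b hb => (ha b (hB hb)).le⟩
    have h3 : ∀ B ∈ s.powerset, (insert a B).card = B.card + 1 := fun B hB =>
      card_insert_of_notMem fun h => has (mem_powerset.1 hB h)
    have hwithout : ∀ B ∈ s.powerset,
        (if ((insert N (insert a s)).filter fun v => ∀ b ∈ B, v ≤ b).card = r + 1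
          then (X : ℚ[X]) ^ B.card else 0) =
        if ((insert N s).filter fun v => ∀ b ∈ B, v ≤ b).card = r
          then (X : ℚ[X]) ^ B.card else 0 := fun B hB => by
      simp only [h1 B hB, Nat.add_right_cancel_iff]
    have hwith : ∀ B ∈ s.powerset,
        (if ((insert N (insert a s)).filter fun v => ∀ b ∈ insert a B, v ≤ b).card = r + 1
          then (X : ℚ[X]) ^ (insert a B).card else 0) =
        if r = 0 then (X : ℚ[X]) ^ (B.card + 1) else 0 := fun B hB => by
      simp only [h2 B hB, h3 B hB, Nat.right_eq_add]
    rw [sum_congr rfl hwithout, sum_congr rfl hwith]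
    cases r with
    | zero =>
      rw [sum_eq_zero, zero_add]
      · have hsum := Finset.sum_pow_mul_eq_add_pow (X : ℚ[X]) 1 s
        simp only [one_pow, mul_one] at hsum
        simp [transferWeight, pow_succ', ← mul_sum, hsum, add_comm]
      · intro B hB
        have hpos : 0 < ((insert N s).filter fun v => ∀ b ∈ B, v ≤ b).card := by
          rw [mem_powerset] at hB
          rw [card_pos]
          rcases B.eq_empty_or_nonempty with rfl | hne
          · exact ⟨N, by simp⟩
          · exact ⟨B.min' hne, mem_filter.2 ⟨mem_insert_of_mem (hB (B.min'_mem hne)),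
              fun b hb => B.min'_le b hb⟩⟩
        rw [if_neg (by omega)]
    | succ r =>
      rw [ih hs r]
      simp [transferWeight]

/-- The generating polynomial, by number of arcs, of the arc systems on `0, …, N` with exactly
`r + 1` visible points. -/
noncomputable def arcPoly (N r : ℕ) : ℚ[X] :=
  ∑ S ∈ arcSystems N, if (visible N S).card = r + 1 then X ^ S.card else 0

theorem arcPoly_succ_succ_eq_sum (N r : ℕ) : arcPoly (N + 1) (r + 1) =
    ∑ C ∈ arcSystems N, X ^ C.card * transferWeight ((visible N C).card - 1) r := by
  rw [arcPoly, sum_arcSystems_succ]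
  refine sum_congr rfl fun C hC => ?_
  rw [mem_arcSystems] at hC
  have hN := self_mem_visible hC
  rw [← card_erase_of_mem hN, ← sum_powerset_transferWeight N, mul_sum]
  · refine sum_congr rfl fun B _ => ?_
    rw [visible_union_fan hC, card_insert_of_notMem, insert_erase hN,
      card_union_of_disjoint, card_fan]
    · simp only [Nat.add_right_cancel_iff, mul_ite, mul_zero, pow_add]
    · rw [disjoint_left]
      intro p hp hp'
      have := hC.1 p hp
      rw [mem_fan] at hp'
      omega
    · simp [mem_visible]
  · intro v hv
    rw [mem_erase, mem_visible] at hv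
    omega

theorem transferWeight_eq (t r : ℕ) : transferWeight t r =
    (1 + X) * transferWeight t (r + 1) + (if t = r then 1 else 0) -
      (if t = r + 1 then 1 else 0) := by
  unfold transferWeight
  rcases lt_trichotomy t r with h | rfl | h
  · simp [show r ≠ t by omega, show ¬ r < t by omega, show r + 1 ≠ t by omega,
      show ¬ r + 1 < t by omega, show t ≠ r by omega, show t ≠ r + 1 by omega]
  · simp
  · obtain ⟨k, rfl⟩ := Nat.exists_eq_add_of_lt h
    cases k with
    | zero => simp
    | succ k =>
      simp only [show r ≠ r + (k + 1) + 1 by omega, show r < r + (k + 1) + 1 by omega,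
        show r + 1 ≠ r + (k + 1) + 1 by omega, show r + 1 < r + (k + 1) + 1 by omega,
        show r + (k + 1) + 1 ≠ r by omega, show r + (k + 1) + 1 ≠ r + 1 by omega,
        show r + (k + 1) + 1 - r - 1 = k + 1 by omega,
        show r + (k + 1) + 1 - (r + 1) - 1 = k by omega, if_true, if_false]
      ring

theorem arcPoly_recurrence (N r : ℕ) : arcPoly (N + 1) (r + 1) =
    (1 + X) * arcPoly (N + 1) (r + 2) + arcPoly N r - arcPoly N (r + 1) := by
  rw [arcPoly_succ_succ_eq_sum, arcPoly_succ_succ_eq_sum, arcPoly, arcPoly, mul_sum,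
    ← sum_add_distrib, ← sum_sub_distrib]
  refine sum_congr rfl fun C hC => ?_
  have hpos : 0 < (visible N C).card := card_pos.2 ⟨0, zero_mem_visible N C⟩
  obtain ⟨t, ht⟩ := Nat.exists_eq_add_of_lt hpos
  rw [ht, transferWeight_eq]
  simp only [zero_add, Nat.add_sub_cancel, Nat.add_right_cancel_iff]
  split_ifs <;> ring

theorem arcPoly_eq_zero_of_lt {N r : ℕ} (h : N < r) : arcPoly N r = 0 := by
  refine sum_eq_zero fun S _ => if_neg ?_
  have := card_filter_le (range (N + 1)) fun v => ∀ p ∈ S, ¬ (p.1 < v ∧ v < p.2)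
  rw [card_range] at this
  unfold visible
  omega

theorem arcPoly_succ_zero (N : ℕ) : arcPoly (N + 1) 0 = 0 := by
  refine sum_eq_zero fun S hS => if_neg fun h => ?_
  obtain ⟨a, ha⟩ := card_eq_one.1 h
  have h0 := zero_mem_visible (N + 1) S
  have h1 := self_mem_visible (mem_arcSystems.1 hS)
  rw [ha, mem_singleton] at h0 h1
  omega

theorem arcPoly_zero_zero : arcPoly 0 0 = 1 := by
  have h : arcSystems 0 = {∅} := by
    ext S
    rw [mem_arcSystems, mem_singleton]
    constructor
    · intro h
      refine eq_empty_of_forall_notMem fun p hp => ?_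
      have := h.1 p hp
      omega
    · rintro rfl
      simp [IsArcSystem]
  simp [arcPoly, h, visible]

theorem arcPoly_self (N : ℕ) : arcPoly N N = 1 := by
  induction N with
  | zero => exact arcPoly_zero_zero
  | succ N ih =>
    rw [arcPoly_recurrence, ih, arcPoly_eq_zero_of_lt (by omega), arcPoly_eq_zero_of_lt (by omega)]
    ring

/-- The number of compositions of `e` into `d` positive parts. -/
def compositionCount : ℕ → ℕ → ℕ
  | 0, 0 => 1
  | e + 1, d + 1 => e.choose d
  | 0, _ + 1 => 0
  | _ + 1, 0 => 0

theorem compositionCount_succ_succ (e d : ℕ) : compositionCount (e + 1) (d + 1) =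
    compositionCount e (d + 1) + compositionCount e d := by
  rcases e with _ | e <;> rcases d with _ | d <;> simp [compositionCount, Nat.choose_succ_succ']
  ring

theorem mul_compositionCount_succ (e d : ℕ) : (d : ℚ) * compositionCount e (d + 1) =
    ((e : ℚ) - d) * compositionCount e d := by
  rcases e with _ | e <;> rcases d with _ | d <;> simp [compositionCount]
  rcases le_or_gt d e with h | h
  · have := Nat.choose_succ_right_eq e d
    have h2 : ((e.choose (d + 1) * (d + 1) : ℕ) : ℚ) = ((e.choose d * (e - d) : ℕ) : ℚ) := by
      rw [this]
    push_cast [Nat.cast_sub h] at h2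
    linarith
  · simp [Nat.choose_eq_zero_of_lt h, Nat.choose_eq_zero_of_lt (show e < d + 1 by omega)]

theorem coeff_arcPoly (N e r d : ℕ) (h : r + e = N + 1) :
    (arcPoly (N + 1) r).coeff d =
      r / ((N : ℚ) + 1) * (N + d).choose d * compositionCount e d := by
  induction N generalizing e r d with
  | zero =>
    rcases r with _ | r
    · simp [arcPoly_succ_zero]
    · obtain ⟨rfl, rfl⟩ : r = 0 ∧ e = 0 := by omega
      rw [arcPoly_self]
      cases d <;> simp [compositionCount, coeff_one]
  | succ N ihN =>
    induction e generalizing r d with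
    | zero =>
      obtain rfl : r = N + 1 + 1 := by omega
      rw [arcPoly_self]
      cases d with
      | zero =>
        simp [compositionCount]
        field_simp
      | succ d => simp [compositionCount, coeff_one]
    | succ e ihe =>
      rcases r with _ | r
      · simp [arcPoly_succ_zero]
      rw [arcPoly_recurrence]
      have hr : (r : ℚ) = N - e := by
        have : ((r + 1 + (e + 1) : ℕ) : ℚ) = ((N + 1 + 1 : ℕ) : ℚ) := by rw [h]
        push_cast at this
        linarith
      cases d with
      | zero =>
        rw [coeff_sub, coeff_add, add_mul, one_mul, coeff_add, mul_coeff_zero, coeff_X_zero,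
          ihe (r + 2) 0 (by omega), ihN (e + 1) r 0 (by omega), ihN e (r + 1) 0 (by omega)]
        rcases e with _ | e
        · simp [compositionCount, hr]
          field_simp
          ring
        · simp [compositionCount]
      | succ d =>
        rw [coeff_sub, coeff_add, add_mul, one_mul, coeff_add, coeff_X_mul,
          ihe (r + 2) (d + 1) (by omega), ihe (r + 2) d (by omega),
          ihN (e + 1) r (d + 1) (by omega), ihN e (r + 1) (d + 1) (by omega),
          compositionCount_succ_succ]
        have hc := mul_compositionCount_succ e d
        have hP : ((N + 1 + (d + 1)).choose (d + 1) : ℚ) =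
            (N + 1 + d).choose d + (N + (d + 1)).choose (d + 1) := by
          rw [show N + 1 + (d + 1) = (N + 1 + d) + 1 by ring, Nat.choose_succ_succ',
            show N + (d + 1) = N + 1 + d by ring]
          push_cast
          rfl
        have hQ : ((N + (d + 1)).choose (d + 1) : ℚ) * (d + 1) =
            (N + 1 + d).choose d * (N + 1) := by
          have := Nat.choose_succ_right_eq (N + 1 + d) d
          rw [show N + 1 + d - d = N + 1 by omega] at this
          rw [show N + (d + 1) = N + 1 + d by ring]
          exact_mod_cast this
        have hd1 : (d : ℚ) + 1 ≠ 0 := by positivity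
        rw [hP]
        have hQ' : ((N + (d + 1)).choose (d + 1) : ℚ) =
            (N + 1 + d).choose d * (N + 1) / (d + 1) := by
          rw [eq_div_iff hd1, hQ]
        rw [hQ']
        push_cast
        generalize ((N + 1 + d).choose d : ℚ) = P
        generalize (compositionCount e (d + 1) : ℚ) = a at *
        generalize (compositionCount e d : ℚ) = b at *
        rw [hr]
        field_simp
        linear_combination P * hc

theorem card_visible_eq_two_iff {N : ℕ} (hN : 2 ≤ N) {S : Finset (ℕ × ℕ)} (hS : IsArcSystem N S) :
    (visible N S).card = 2 ↔ (0, N) ∈ S := by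
  constructor
  · intro h
    have key : ∀ m, m < N → m ∈ visible N S → m = 0 := by
      intro m hm hmv
      by_contra h0
      have hsub : ({0, m, N} : Finset ℕ) ⊆ visible N S := by
        intro x hx
        simp only [mem_insert, mem_singleton] at hx
        rcases hx with rfl | rfl | rfl
        · exact zero_mem_visible _ _
        · exact hmv
        · exact self_mem_visible hS
      have := card_le_card hsub
      rw [h, card_eq_three.2 ⟨0, m, N, by omega, by omega, by omega, rfl⟩] at this
      omega
    by_cases hB : ∃ b, (b, N) ∈ S
    · classical
      have hb := Nat.find_spec hB
      have hmin := fun m => Nat.find_min' hB (m := m)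
      generalize Nat.find hB = b at hb hmin
      have hbN := hS.1 _ hb
      have hb0 : b = 0 := by
        refine key b (by simp only at hbN; omega) (mem_visible.2 ⟨by simp only at hbN; omega, ?_⟩)
        rintro ⟨i, j⟩ hp ⟨hi, hj⟩
        have h1 := hS.1 _ hp
        have h2 := hS.2 _ hp _ hb
        simp only at h1 h2 hi hj
        by_cases hjN : j = N
        · subst hjN
          have := hmin i hp
          omega
        · omega
      rwa [hb0] at hb
    · have := key (N - 1) (by omega) (mem_visible.2 ⟨by omega, ?_⟩)
      · omega
      · rintro ⟨i, j⟩ hp ⟨hi, hj⟩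
        have h1 := hS.1 _ hp
        simp only at h1 hj
        obtain rfl : j = N := by omega
        exact hB ⟨i, hp⟩
  · intro h
    rw [card_eq_two]
    refine ⟨0, N, by omega, ?_⟩
    ext v
    simp only [mem_insert, mem_singleton]
    constructor
    · intro hv
      have := (mem_visible.1 hv).2 _ h
      have := (mem_visible.1 hv).1
      simp only at *
      omega
    · rintro (rfl | rfl)
      · exact zero_mem_visible _ _
      · exact self_mem_visible hS

theorem card_arcSystems_filter {N : ℕ} (hN : 2 ≤ N) (d : ℕ) :
    (((arcSystems N).filter fun S => (0, N) ∈ S ∧ S.card = d).card : ℚ) =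
      (arcPoly N 1).coeff d := by
  rw [arcPoly, finsetSum_coeff, card_filter, Nat.cast_sum]
  refine sum_congr rfl fun S hS => ?_
  simp only [← card_visible_eq_two_iff hN (mem_arcSystems.1 hS)]
  by_cases h : (visible N S).card = 2
  · simp [h, coeff_X_pow, eq_comm]
  · simp [h]

/-- The endpoints of a chord, in increasing order. -/
def endpoints {n : ℕ} (p : Finset (Fin n)) : ℕ × ℕ :=
  if h : p.Nonempty then (p.min' h, p.max' h) else (0, 0)

theorem endpoints_pair {n : ℕ} {i j : Fin n} (h : i < j) :
    endpoints {i, j} = ((i : ℕ), (j : ℕ)) := by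
  have hne : ({i, j} : Finset (Fin n)).Nonempty := ⟨i, by simp⟩
  rw [endpoints, dif_pos hne, min'_pair, max'_pair, min_eq_left h.le, max_eq_right h.le]

theorem isDiagonal_iff {N : ℕ} (p : Finset (Fin (N + 1))) : IsDiagonal (N + 1) p ↔
    ∃ i j : Fin (N + 1), (i : ℕ) + 2 ≤ j ∧ ¬ ((i : ℕ) = 0 ∧ (j : ℕ) = N) ∧ p = {i, j} := by
  have hmod : ∀ a : Fin (N + 1),
      (a.val + 1) % (N + 1) = if a.val = N then 0 else a.val + 1 := by
    intro a
    split_ifs with h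
    · simp [h]
    · exact Nat.mod_eq_of_lt (by omega)
  simp only [IsDiagonal, cycAdj, hmod]
  constructor
  · rintro ⟨i, j, hij, hadj, rfl⟩
    have hij' : (i : ℕ) ≠ j := fun h => hij (Fin.ext h)
    rcases lt_or_gt_of_ne hij' with h | h
    · exact ⟨i, j, by split_ifs at hadj <;> omega, by split_ifs at hadj <;> omega, rfl⟩
    · exact ⟨j, i, by split_ifs at hadj <;> omega, by split_ifs at hadj <;> omega,
        Finset.pair_comm _ _⟩
  · rintro ⟨i, j, hij, h0, rfl⟩
    refine ⟨i, j, fun h => by subst h; omega, ?_, rfl⟩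
    split_ifs <;> omega

theorem cross_pair_iff {n : ℕ} {i j k l : Fin n} (hij : i < j) (hkl : k < l) :
    Cross n {i, j} {k, l} ↔ (i < k ∧ k < j ∧ j < l) ∨ (k < i ∧ i < l ∧ l < j) := by
  constructor
  · rintro ⟨a, b, c, d, hac, hcb, hbd, ⟨h1, h2⟩ | ⟨h1, h2⟩⟩
    all_goals
      have e1 := congrArg endpoints h1
      have e2 := congrArg endpoints h2
      rw [endpoints_pair hij, endpoints_pair (by omega), Prod.mk.injEq] at e1
      rw [endpoints_pair hkl, endpoints_pair (by omega), Prod.mk.injEq] at e2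
      omega
  · rintro (⟨h1, h2, h3⟩ | ⟨h1, h2, h3⟩)
    · exact ⟨i, j, k, l, h1, h2, h3, Or.inl ⟨rfl, rfl⟩⟩
    · exact ⟨k, l, i, j, h1, h2, h3, Or.inr ⟨rfl, rfl⟩⟩

theorem endpoints_injOn_diagonals {N : ℕ} :
    Set.InjOn endpoints {p : Finset (Fin (N + 1)) | IsDiagonal (N + 1) p} := by
  intro p hp q hq h
  obtain ⟨i, j, hij, -, rfl⟩ := (isDiagonal_iff p).1 hp
  obtain ⟨k, l, hkl, -, rfl⟩ := (isDiagonal_iff q).1 hq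
  rw [endpoints_pair (by omega), endpoints_pair (by omega), Prod.mk.injEq] at h
  rw [Fin.ext h.1, Fin.ext h.2]

open scoped Classical in
/-- The sets of `d` pairwise non-crossing diagonals of the `(N + 1)`-gon. -/
noncomputable def dissections (N d : ℕ) : Finset (Finset (Finset (Fin (N + 1)))) :=
  univ.filter fun S => S.card = d ∧ (∀ p ∈ S, IsDiagonal (N + 1) p) ∧
    (S : Set (Finset (Fin (N + 1)))).Pairwise fun p q => ¬ Cross (N + 1) p q

/-- Adding the arc `(0, N)` turns dissections of the `(N + 1)`-gon into arc systems. -/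
theorem card_dissections {N : ℕ} (hN : 2 ≤ N) (d : ℕ) : (dissections N d).card =
    ((arcSystems N).filter fun S => (0, N) ∈ S ∧ S.card = d + 1).card := by
  have hnot : ∀ S : Finset (Finset (Fin (N + 1))), (∀ p ∈ S, IsDiagonal (N + 1) p) →
      (0, N) ∉ S.image endpoints := by
    intro S hS h
    obtain ⟨p, hp, hpe⟩ := mem_image.1 h
    obtain ⟨i, j, hij, h0, rfl⟩ := (isDiagonal_iff p).1 (hS p hp)
    rw [endpoints_pair (by omega), Prod.mk.injEq] at hpe
    exact h0 hpe
  refine card_bij (fun S _ => insert (0, N) (S.image endpoints)) ?_ ?_ ?_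
  · intro S hS
    simp only [dissections, mem_filter, mem_univ, true_and] at hS
    obtain ⟨hcard, hdiag, hcross⟩ := hS
    rw [mem_filter, mem_arcSystems, card_insert_of_notMem (hnot S hdiag),
      card_image_of_injOn (endpoints_injOn_diagonals.mono hdiag), hcard]
    have himg : ∀ x ∈ S.image endpoints, ∃ i j : Fin (N + 1),
        (i : ℕ) + 2 ≤ j ∧ x = ((i : ℕ), (j : ℕ)) ∧ {i, j} ∈ S := by
      intro x hx
      obtain ⟨p, hp, rfl⟩ := mem_image.1 hx
      obtain ⟨i, j, hij, -, rfl⟩ := (isDiagonal_iff p).1 (hdiag p hp)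
      exact ⟨i, j, hij, endpoints_pair (by omega), hp⟩
    refine ⟨⟨fun x hx => ?_, fun x hx y hy => ?_⟩, mem_insert_self _ _, rfl⟩
    · rcases mem_insert.1 hx with rfl | hx
      · simpa using hN
      · obtain ⟨i, j, hij, rfl, -⟩ := himg x hx
        simp only
        omega
    · rcases mem_insert.1 hx with rfl | hx <;> rcases mem_insert.1 hy with rfl | hy
      · omega
      · obtain ⟨i, j, hij, rfl, -⟩ := himg y hy
        simp only
        omega
      · simp only
        omega
      · obtain ⟨i, j, hij, rfl, hp⟩ := himg x hx
        obtain ⟨k, l, hkl, rfl, hq⟩ := himg y hy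
        rintro ⟨h1, h2, h3⟩
        have hne : ({i, j} : Finset (Fin (N + 1))) ≠ {k, l} := by
          intro h
          have := congrArg endpoints h
          rw [endpoints_pair (by omega), endpoints_pair (by omega), Prod.mk.injEq] at this
          simp only at h1
          omega
        exact hcross hp hq hne
          ((cross_pair_iff (by omega) (by omega)).2 (Or.inl ⟨h1, h2, h3⟩))
  · intro S hS T hT h
    simp only [dissections, mem_filter, mem_univ, true_and] at hS hT
    have himg : S.image endpoints = T.image endpoints := by
      rw [← erase_insert (hnot S hS.2.1), h, erase_insert (hnot T hT.2.1)]
    have hset : Set.image endpoints (S : Set (Finset (Fin (N + 1)))) =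
        Set.image endpoints (T : Set (Finset (Fin (N + 1)))) := by
      rw [← coe_image, himg, coe_image]
    exact coe_injective
      ((endpoints_injOn_diagonals.image_eq_image_iff hS.2.1 hT.2.1).1 hset)
  · intro T hT
    simp only [mem_filter, mem_arcSystems] at hT
    obtain ⟨⟨hT1, hT2⟩, h0, hcard⟩ := hT
    classical
    let S : Finset (Finset (Fin (N + 1))) := univ.filter fun p =>
      ∃ i j : Fin (N + 1), ((i : ℕ), (j : ℕ)) ∈ T.erase (0, N) ∧ p = {i, j}
    have hS : ∀ p ∈ S, ∃ i j : Fin (N + 1), (i : ℕ) + 2 ≤ j ∧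
        ¬ ((i : ℕ) = 0 ∧ (j : ℕ) = N) ∧ ((i : ℕ), (j : ℕ)) ∈ T ∧ p = {i, j} := by
      intro p hp
      obtain ⟨i, j, hij, rfl⟩ := (mem_filter.1 hp).2
      rw [mem_erase, Ne, Prod.mk.injEq] at hij
      exact ⟨i, j, (hT1 _ hij.2).1, hij.1, hij.2, rfl⟩
    have hdiag : ∀ p ∈ S, IsDiagonal (N + 1) p := by
      intro p hp
      obtain ⟨i, j, hij, hne, -, rfl⟩ := hS p hp
      exact (isDiagonal_iff _).2 ⟨i, j, hij, hne, rfl⟩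
    have himg : S.image endpoints = T.erase (0, N) := by
      ext ⟨a, b⟩
      rw [mem_image]
      constructor
      · rintro ⟨p, hp, hpe⟩
        obtain ⟨i, j, hij, hne, hmem, rfl⟩ := hS p hp
        rw [endpoints_pair (by omega)] at hpe
        rw [← hpe, mem_erase, Ne, Prod.mk.injEq]
        exact ⟨hne, hmem⟩
      · intro hab
        have h := hT1 _ (mem_of_mem_erase hab)
        simp only at h
        refine ⟨{⟨a, by omega⟩, ⟨b, by omega⟩}, mem_filter.2 ⟨mem_univ _, _, _, hab, rfl⟩, ?_⟩
        exact endpoints_pair (by simp only [Fin.mk_lt_mk]; omega)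
    refine ⟨S, ?_, ?_⟩
    · simp only [dissections, mem_filter, mem_univ, true_and]
      refine ⟨?_, hdiag, ?_⟩
      · rw [← card_image_of_injOn (endpoints_injOn_diagonals.mono hdiag), himg,
          card_erase_of_mem h0, hcard, Nat.add_sub_cancel]
      · intro p hp q hq _
        obtain ⟨i, j, hij, -, hp', rfl⟩ := hS p hp
        obtain ⟨k, l, hkl, -, hq', rfl⟩ := hS q hq
        rw [cross_pair_iff (by omega) (by omega)]
        rintro (h | h)
        · exact hT2 _ hp' _ hq' h
        · exact hT2 _ hq' _ hp' h
    · rw [himg, insert_erase h0]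

/-- For `n ≥ 4` and `d ≤ n - 3`, the number of ways to choose `d` pairwise non-crossing
diagonals of a convex `n`-gon equals `(1/(n+d)) * C(n+d, d+1) * C(n-3, d)`. -/
theorem noncrossing_diagonal_count (n d : ℕ) (hn : 4 ≤ n) (hd : d ≤ n - 3) :
    (Nat.card {S : Finset (Finset (Fin n)) //
        S.card = d ∧ (∀ p ∈ S, IsDiagonal n p) ∧
        (S : Set (Finset (Fin n))).Pairwise fun p q => ¬ Cross n p q} : ℚ) =
      (1 / ((n : ℚ) + d)) * ((n + d).choose (d + 1)) * ((n - 3).choose d) := by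
  obtain ⟨M, rfl⟩ : ∃ M, n = M + 1 + 1 := ⟨n - 2, by omega⟩
  classical
  rw [Nat.card_eq_fintype_card, Fintype.card_subtype]
  have h := card_arcSystems_filter (N := M + 1) (by omega) (d + 1)
  rw [← card_dissections (by omega), coeff_arcPoly M M 1 (d + 1) (by omega)] at h
  obtain ⟨K, rfl⟩ : ∃ K, M = K + 1 := ⟨M - 1, by omega⟩
  have hchoose : ((K + 1 + (d + 1)).choose (d + 1) : ℚ) * (K + 1 + 1 + 1 + d) =
      (K + 1 + 1 + 1 + d).choose (d + 1) * (K + 1 + 1) := by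
    have := Nat.choose_mul_succ_eq (K + 1 + (d + 1)) (d + 1)
    rw [show K + 1 + (d + 1) + 1 - (d + 1) = K + 1 + 1 by omega,
      show K + 1 + (d + 1) + 1 = K + 1 + 1 + 1 + d by ring] at this
    exact_mod_cast this
  have hK : K + 1 + 1 + 1 - 3 = K := by omega
  unfold dissections at h
  rw [h, hK]
  simp only [compositionCount]
  push_cast
  have h1 : (K : ℚ) + 1 + 1 ≠ 0 := by positivity
  have h2 : (K : ℚ) + 1 + 1 + 1 + d ≠ 0 := by positivity
  field_simp
  linear_combination (K.choose d : ℚ) * hchoose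
end

section
/- For n ≥ 5 and 1 ≤ d ≤ n-3, the number of standard Young tableaux of shape (d+1, 2, 1^(n-d-3)) equals C(n, d+1) · d(n-d-2)/(n-1). -/
/-- `c = (i, j)` is a cell of the Young diagram with row lengths `shape`
(row `i`, column `j`, both `0`-indexed). -/
def IsCell (shape : List ℕ) (c : ℕ × ℕ) : Prop := c.2 < shape.getD c.1 0

/-- `T` is a standard Young tableau of shape `shape`: it vanishes off the diagram,
its entries on the diagram are a filling by the distinct values `1, …, N`
(`N` the number of boxes), and entries increase along rows and down columns. -/
def IsSYT (shape : List ℕ) (T : ℕ × ℕ → ℕ) : Prop :=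
  (∀ c, ¬ IsCell shape c → T c = 0) ∧
  (∀ c, IsCell shape c → 1 ≤ T c ∧ T c ≤ shape.sum) ∧
  (∀ c c', IsCell shape c → IsCell shape c' → T c = T c' → c = c') ∧
  (∀ i j, IsCell shape (i, j + 1) → T (i, j) < T (i, j + 1)) ∧
  (∀ i j, IsCell shape (i + 1, j) → T (i, j) < T (i + 1, j))

/-- The number of standard Young tableaux of shape `shape`. -/
noncomputable def sytCount (shape : List ℕ) : ℕ :=
  Nat.card {T : ℕ × ℕ → ℕ // IsSYT shape T}

section StandardFillings

open Set Function

/-- Standard fillings of an arbitrary set `S` of cells by `1, …, N`. -/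
def standardFillings (S : Set (ℕ × ℕ)) (N : ℕ) : Set (ℕ × ℕ → ℕ) :=
  {T | (∀ c, c ∉ S → T c = 0) ∧ BijOn T S (Icc 1 N) ∧
    (∀ i j, (i, j + 1) ∈ S → T (i, j) < T (i, j + 1)) ∧
    (∀ i j, (i + 1, j) ∈ S → T (i, j) < T (i + 1, j))}

/-- A cell of `S` with neither a right nor a lower neighbour in `S`. -/
def IsCornerCell (S : Set (ℕ × ℕ)) (c : ℕ × ℕ) : Prop :=
  c ∈ S ∧ (c.1, c.2 + 1) ∉ S ∧ (c.1 + 1, c.2) ∉ S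

lemma update_mem_standardFillings {S : Set (ℕ × ℕ)} {N : ℕ} {c : ℕ × ℕ} (hc : IsCornerCell S c)
    {T : ℕ × ℕ → ℕ} (hT : T ∈ standardFillings (S \ {c}) N) :
    update T c (N + 1) ∈ standardFillings S (N + 1) := by
  obtain ⟨h0, hb, hr, hd⟩ := hT
  obtain ⟨hcS, hcr, hcd⟩ := hc
  have hle : ∀ x, T x ≤ N := by
    intro x
    by_cases hx : x ∈ S \ {c}
    · exact (hb.mapsTo hx).2
    · simp [h0 x hx]
  refine ⟨?_, ⟨?_, ?_, ?_⟩, ?_, ?_⟩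
  · intro x hx
    have : x ≠ c := by rintro rfl; exact hx hcS
    rw [update_of_ne this]
    exact h0 x fun h => hx h.1
  · intro x hx
    by_cases h : x = c
    · subst h; simp
    · rw [update_of_ne h]
      have := hb.mapsTo (show x ∈ S \ {c} from ⟨hx, h⟩)
      exact ⟨this.1, this.2.trans (Nat.le_succ N)⟩
  · intro x hx y hy hxy
    by_cases h : x = c <;> by_cases h' : y = c
    · rw [h, h']
    · subst h; rw [update_self, update_of_ne h'] at hxy
      have := hle y; omega
    · subst h'; rw [update_self, update_of_ne h] at hxy
      have := hle x; omega
    · rw [update_of_ne h, update_of_ne h'] at hxy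
      exact hb.injOn ⟨hx, h⟩ ⟨hy, h'⟩ hxy
  · rintro k ⟨hk1, hk2⟩
    by_cases h : k = N + 1
    · exact ⟨c, hcS, by simp [h]⟩
    · obtain ⟨x, hx, hxk⟩ := hb.surjOn (show k ∈ Icc 1 N from ⟨hk1, by omega⟩)
      exact ⟨x, hx.1, by rw [update_of_ne hx.2, hxk]⟩
  · intro i j hij
    have h1 : (i, j) ≠ c := by rintro rfl; exact hcr hij
    rw [update_of_ne h1]
    by_cases h : (i, j + 1) = c
    · rw [h, update_self]; exact Nat.lt_succ_of_le (hle _)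
    · rw [update_of_ne h]; exact hr i j ⟨hij, h⟩
  · intro i j hij
    have h1 : (i, j) ≠ c := by rintro rfl; exact hcd hij
    rw [update_of_ne h1]
    by_cases h : (i + 1, j) = c
    · rw [h, update_self]; exact Nat.lt_succ_of_le (hle _)
    · rw [update_of_ne h]; exact hd i j ⟨hij, h⟩

lemma exists_corner_of_mem_standardFillings {S : Set (ℕ × ℕ)} {N : ℕ} {T : ℕ × ℕ → ℕ}
    (hT : T ∈ standardFillings S (N + 1)) : ∃ c, IsCornerCell S c ∧
      ∃ T' ∈ standardFillings (S \ {c}) N, update T' c (N + 1) = T := by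
  obtain ⟨h0, hb, hr, hd⟩ := hT
  obtain ⟨c, hc, hcN⟩ := hb.surjOn (show N + 1 ∈ Icc 1 (N + 1) from ⟨by omega, le_rfl⟩)
  have hcr : (c.1, c.2 + 1) ∉ S := fun h => by
    have h1 : T c < _ := hr c.1 c.2 h
    have h2 := (hb.mapsTo h).2
    omega
  have hcd : (c.1 + 1, c.2) ∉ S := fun h => by
    have h1 : T c < _ := hd c.1 c.2 h
    have h2 := (hb.mapsTo h).2
    omega
  refine ⟨c, ⟨hc, hcr, hcd⟩, update T c 0, ⟨?_, ⟨?_, ?_, ?_⟩, ?_, ?_⟩, ?_⟩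
  · intro x hx
    by_cases h : x = c
    · simp [h]
    · rw [update_of_ne h]; exact h0 x fun hS => hx ⟨hS, h⟩
  · rintro x ⟨hx, h⟩
    rw [update_of_ne h]
    have h1 := hb.mapsTo hx
    have h2 : T x ≠ N + 1 := fun h' => h (hb.injOn hx hc (h'.trans hcN.symm))
    exact ⟨h1.1, by have := h1.2; omega⟩
  · rintro x ⟨hx, h⟩ y ⟨hy, h'⟩ hxy
    rw [update_of_ne h, update_of_ne h'] at hxy
    exact hb.injOn hx hy hxy
  · rintro k ⟨hk1, hk2⟩
    obtain ⟨x, hx, hxk⟩ := hb.surjOn (show k ∈ Icc 1 (N + 1) from ⟨hk1, by omega⟩)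
    have h : x ≠ c := by rintro rfl; omega
    exact ⟨x, ⟨hx, h⟩, by rw [update_of_ne h, hxk]⟩
  · rintro i j ⟨hij, h⟩
    have h1 : (i, j) ≠ c := by rintro rfl; exact hcr hij
    rw [update_of_ne h1, update_of_ne h]
    exact hr i j hij
  · rintro i j ⟨hij, h⟩
    have h1 : (i, j) ≠ c := by rintro rfl; exact hcd hij
    rw [update_of_ne h1, update_of_ne h]
    exact hd i j hij
  · rw [update_idem, ← hcN, update_eq_self]

/-- Branching rule: removing the largest entry. -/
lemma encard_standardFillings_succ {S : Set (ℕ × ℕ)} {N : ℕ} (C : Finset (ℕ × ℕ))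
    (hC : ∀ c, c ∈ C ↔ IsCornerCell S c) :
    (standardFillings S (N + 1)).encard = ∑ c ∈ C, (standardFillings (S \ {c}) N).encard := by
  have key : standardFillings S (N + 1) =
      ⋃ c ∈ C, (fun T => update T c (N + 1)) '' standardFillings (S \ {c}) N := by
    ext T
    simp only [mem_iUnion, mem_image, exists_prop, hC]
    constructor
    · exact exists_corner_of_mem_standardFillings
    · rintro ⟨c, hc, T', hT', rfl⟩
      exact update_mem_standardFillings hc hT'
  have hdisj : (C : Set (ℕ × ℕ)).PairwiseDisjoint
      fun c => (fun T => update T c (N + 1)) '' standardFillings (S \ {c}) N := by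
    intro c _ c' hc' hne
    refine Set.disjoint_left.2 ?_
    rintro _ ⟨T, hT, rfl⟩ ⟨T', hT', h⟩
    have h1 : N + 1 = T c' := by
      simpa [update_of_ne hne.symm] using congrFun h c'
    have h2 := (hT.2.1.mapsTo (show c' ∈ S \ {c} from ⟨((hC c').1 hc').1, hne.symm⟩)).2
    omega
  have himage : ∀ c, ((fun T => update T c (N + 1)) '' standardFillings (S \ {c}) N).encard =
      (standardFillings (S \ {c}) N).encard := by
    intro c
    refine InjOn.encard_image fun T hT T' hT' h => funext fun x => ?_
    by_cases hx : x = c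
    · rw [hT.1 x (by simp [hx]), hT'.1 x (by simp [hx])]
    · simpa [update_of_ne hx] using congrFun h x
  have hU := C.finite_toSet.encard_biUnion hdisj
  simp only [Finset.mem_coe] at hU
  rw [key, hU]
  simp only [himage]
  exact finsum_mem_coe_finset _ C

lemma encard_standardFillings_empty : (standardFillings ∅ 0).encard = 1 := by
  rw [encard_eq_one]
  refine ⟨fun _ => 0, ?_⟩
  ext T
  constructor
  · exact fun hT => funext fun x => hT.1 x (by simp)
  · rintro rfl
    simp [standardFillings, BijOn, MapsTo, InjOn, SurjOn]

/-- The hook with arm length `a` and leg length `b`. -/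
def hookCells (a b : ℕ) : Set (ℕ × ℕ) := {c | (c.1 = 0 ∧ c.2 ≤ a) ∨ (c.2 = 0 ∧ c.1 ≤ b)}

/-- The hook with arm length `a` and leg length `b`, with the cell `(1, 1)` added. -/
def nearHookCells (a b : ℕ) : Set (ℕ × ℕ) :=
  {c | (c.1 = 0 ∧ c.2 ≤ a) ∨ (c.2 = 0 ∧ c.1 ≤ b) ∨ (c.1 = 1 ∧ c.2 = 1)}

lemma encard_standardFillings_hookCells (a b : ℕ) :
    (standardFillings (hookCells a b) (a + b + 1)).encard = (a + b).choose a := by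
  induction h : a + b generalizing a b with
  | zero =>
    obtain ⟨rfl, rfl⟩ : a = 0 ∧ b = 0 := by omega
    rw [encard_standardFillings_succ {(0, 0)}]
    · have : hookCells 0 0 \ {(0, 0)} = ∅ := by
        ext ⟨i, j⟩; simp [hookCells]; omega
      simp [this, encard_standardFillings_empty]
    · rintro ⟨i, j⟩
      simp [IsCornerCell, hookCells]; omega
  | succ s ih =>
    rcases a with _ | a
    · obtain rfl : b = s + 1 := by omega
      rw [encard_standardFillings_succ {(s + 1, 0)}]
      · have : hookCells 0 (s + 1) \ {(s + 1, 0)} = hookCells 0 s := by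
          ext ⟨i, j⟩; simp [hookCells]; omega
        simpa [this] using ih 0 s (by omega)
      · rintro ⟨i, j⟩
        simp [IsCornerCell, hookCells]; omega
    rcases b with _ | b
    · obtain rfl : a = s := by omega
      rw [encard_standardFillings_succ {(0, a + 1)}]
      · have : hookCells (a + 1) 0 \ {(0, a + 1)} = hookCells a 0 := by
          ext ⟨i, j⟩; simp [hookCells]; omega
        simpa [this] using ih a 0 (by omega)
      · rintro ⟨i, j⟩
        simp [IsCornerCell, hookCells]; omega
    · rw [encard_standardFillings_succ {(0, a + 1), (b + 1, 0)}]
      · have h1 : hookCells (a + 1) (b + 1) \ {(0, a + 1)} = hookCells a (b + 1) := by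
          ext ⟨i, j⟩; simp [hookCells]; omega
        have h2 : hookCells (a + 1) (b + 1) \ {(b + 1, 0)} = hookCells (a + 1) b := by
          ext ⟨i, j⟩; simp [hookCells]; omega
        rw [Finset.sum_pair (by simp), h1, h2, ih a (b + 1) (by omega), ih (a + 1) b (by omega),
          Nat.choose_succ_succ]
        push_cast; rfl
      · rintro ⟨i, j⟩
        simp [IsCornerCell, hookCells]; omega

lemma choose_left_shift (p m : ℕ) :
    ((p + 1 + m + 2).choose (p + 2) : ℚ) * (p + 2) =
      (p + m + 3) * ((p + m + 2).choose (p + 1) : ℚ) := by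
  have := Nat.add_one_mul_choose_eq (p + m + 2) (p + 1)
  rw [show p + 1 + m + 2 = p + m + 2 + 1 by ring]
  have h : (((p + m + 2 + 1 : ℕ) : ℚ) * (p + m + 2).choose (p + 1) =
    (p + m + 2 + 1).choose (p + 1 + 1) * ((p + 1 + 1 : ℕ) : ℚ)) := by exact_mod_cast this
  push_cast at h
  linear_combination -h

lemma choose_right_shift (p m : ℕ) :
    ((p + (m + 1) + 2).choose (p + 1) : ℚ) * (m + 2) =
      (p + m + 3) * ((p + m + 2).choose (p + 1) : ℚ) := by
  have h := choose_left_shift m p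
  rw [← Nat.choose_symm_of_eq_add (show p + (m + 1) + 2 = m + 2 + (p + 1) by ring),
    ← Nat.choose_symm_of_eq_add (show p + m + 2 = m + 1 + (p + 1) by ring)]
  rw [show p + (m + 1) + 2 = m + 1 + p + 2 by ring, show p + m + 2 = m + p + 2 by ring]
  linear_combination h

/-- The hook length formula for near-hooks. -/
def nearHookCount (p m : ℕ) : ℚ :=
  ((p + m + 2).choose (p + 1) : ℚ) * (p + m + 4) * (p + 1) * (m + 1) / ((p + 2) * (m + 2))

lemma nearHookCount_zero_succ (m : ℕ) : nearHookCount 0 (m + 1) =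
    ((0 + (m + 1) + 2).choose (0 + 1) : ℚ) + nearHookCount 0 m := by
  simp only [nearHookCount, zero_add, Nat.choose_one_right]
  push_cast
  field_simp
  ring

lemma nearHookCount_comm (p m : ℕ) : nearHookCount p m = nearHookCount m p := by
  unfold nearHookCount
  rw [← Nat.choose_symm_of_eq_add (show p + m + 2 = m + 1 + (p + 1) by ring), add_comm p m]
  ring

lemma nearHookCount_succ_zero (p : ℕ) : nearHookCount (p + 1) 0 =
    ((p + 1 + 0 + 2).choose (p + 1 + 1) : ℚ) + nearHookCount p 0 := by
  rw [nearHookCount_comm, nearHookCount_zero_succ, nearHookCount_comm 0 p,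
    ← Nat.choose_symm_of_eq_add (show p + 1 + 0 + 2 = 1 + (p + 1 + 1) by ring)]
  congr 4; ring

lemma nearHookCount_succ_succ (p m : ℕ) : nearHookCount (p + 1) (m + 1) =
    ((p + 1 + (m + 1) + 2).choose (p + 1 + 1) : ℚ) +
      (nearHookCount p (m + 1) + nearHookCount (p + 1) m) := by
  have h1 := choose_left_shift p (m + 1)
  have h2 := choose_right_shift (p + 1) m
  rw [← eq_div_iff (by positivity)] at h2
  have h3 : ((p + (m + 1) + 2).choose (p + 1) : ℚ) =
      ((p + 1 + (m + 1) + 2).choose (p + 2) : ℚ) * (p + 2) / (p + m + 4) := by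
    rw [eq_div_iff (by positivity)]
    push_cast at h1
    linear_combination -h1
  have h4 : ((p + 1 + m + 2).choose (p + 1 + 1) : ℚ) =
      ((p + 1 + (m + 1) + 2).choose (p + 2) : ℚ) * (m + 2) / (p + m + 4) := by
    rw [h2]
    push_cast
    field_simp
    ring
  unfold nearHookCount
  rw [h3, h4, show p + 1 + 1 = p + 2 from rfl]
  push_cast
  field_simp
  ring

lemma encard_standardFillings_nearHookCells (p m : ℕ) :
    ∃ k : ℕ, (standardFillings (nearHookCells (p + 1) (m + 1)) (p + m + 4)).encard = k ∧
      (k : ℚ) = nearHookCount p m := by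
  have hook : ∀ p m, (standardFillings (nearHookCells (p + 1) (m + 1) \ {(1, 1)})
      (p + m + 3)).encard = (p + m + 2).choose (p + 1) := by
    intro p m
    have h : nearHookCells (p + 1) (m + 1) \ {(1, 1)} = hookCells (p + 1) (m + 1) := by
      ext ⟨i, j⟩; simp [hookCells, nearHookCells]; omega
    have hcount := encard_standardFillings_hookCells (p + 1) (m + 1)
    rwa [← h, show p + 1 + (m + 1) + 1 = p + m + 3 by ring,
      show p + 1 + (m + 1) = p + m + 2 by ring] at hcount
  have arm : ∀ p m, nearHookCells (p + 1 + 1) (m + 1) \ {(0, p + 2)} =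
      nearHookCells (p + 1) (m + 1) := by
    intro p m; ext ⟨i, j⟩; simp [nearHookCells]; omega
  have leg : ∀ p m, nearHookCells (p + 1) (m + 1 + 1) \ {(m + 2, 0)} =
      nearHookCells (p + 1) (m + 1) := by
    intro p m; ext ⟨i, j⟩; simp [nearHookCells]; omega
  induction h : p + m generalizing p m with
  | zero =>
    obtain ⟨rfl, rfl⟩ : p = 0 ∧ m = 0 := by omega
    refine ⟨2, ?_, by norm_num [nearHookCount, Nat.choose]⟩
    rw [encard_standardFillings_succ {(1, 1)}]
    · simpa using hook 0 0
    · rintro ⟨i, j⟩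
      simp [IsCornerCell, nearHookCells]; omega
  | succ s ih =>
    rw [← h]
    rcases p with _ | p
    · obtain rfl : m = s + 1 := by omega
      obtain ⟨k, hk, hk'⟩ := ih 0 s (by omega)
      refine ⟨(0 + (s + 1) + 2).choose (0 + 1) + k, ?_, ?_⟩
      · rw [encard_standardFillings_succ {(1, 1), (s + 2, 0)}]
        · rw [Finset.sum_pair (by simp), hook, leg, show 0 + (s + 1) + 3 = s + 4 by ring, hk]
          push_cast; rfl
        · rintro ⟨i, j⟩
          simp [IsCornerCell, nearHookCells]; omega
      · rw [nearHookCount_zero_succ, ← hk']; push_cast; rfl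
    rcases m with _ | m
    · obtain rfl : p = s := by omega
      obtain ⟨k, hk, hk'⟩ := ih p 0 (by omega)
      refine ⟨(p + 1 + 0 + 2).choose (p + 1 + 1) + k, ?_, ?_⟩
      · rw [encard_standardFillings_succ {(1, 1), (0, p + 2)}]
        · rw [Finset.sum_pair (by simp), hook, arm, show p + 1 + 0 + 3 = p + 4 by ring, hk]
          push_cast; rfl
        · rintro ⟨i, j⟩
          simp [IsCornerCell, nearHookCells]; omega
      · rw [nearHookCount_succ_zero, ← hk']; push_cast; rfl
    · obtain ⟨k, hk, hk'⟩ := ih p (m + 1) (by omega)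
      obtain ⟨l, hl, hl'⟩ := ih (p + 1) m (by omega)
      refine ⟨(p + 1 + (m + 1) + 2).choose (p + 1 + 1) + (k + l), ?_, ?_⟩
      · rw [encard_standardFillings_succ {(1, 1), (0, p + 2), (m + 2, 0)}]
        · rw [Finset.sum_insert (by simp), Finset.sum_pair (by simp), hook, arm, leg,
            show p + 1 + (m + 1) + 3 = s + 4 by omega, hk, hl]
          push_cast; rfl
        · rintro ⟨i, j⟩
          simp [IsCornerCell, nearHookCells]; omega
      · rw [nearHookCount_succ_succ, ← hk', ← hl']; push_cast; rfl

lemma isCell_iff_mem_nearHookCells (p m : ℕ) (c : ℕ × ℕ) :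
    IsCell ((p + 1 + 1) :: 2 :: List.replicate m 1) c ↔ c ∈ nearHookCells (p + 1) (m + 1) := by
  obtain ⟨_ | _ | i, j⟩ := c
  · simp [IsCell, nearHookCells]; omega
  · simp [IsCell, nearHookCells]; omega
  · by_cases h : i < m <;>
      simp [IsCell, nearHookCells, List.getD_eq_getElem?_getD, h]

lemma encard_nearHookCells (p m : ℕ) :
    (nearHookCells (p + 1) (m + 1)).encard = (p + m + 4 : ℕ) := by
  have h : nearHookCells (p + 1) (m + 1) =
      ((Finset.range (p + 2)).image (fun j => ((0 : ℕ), j)) ∪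
        ((Finset.Icc 1 (m + 1)).image (fun i => (i, (0 : ℕ))) ∪ {(1, 1)}) : Finset (ℕ × ℕ)) := by
    ext ⟨i, j⟩
    simp [nearHookCells]; omega
  rw [h, encard_coe_eq_coe_finsetCard, Finset.card_union_of_disjoint,
    Finset.card_union_of_disjoint, Finset.card_image_of_injective, Finset.card_image_of_injective]
  · simp; norm_cast; omega
  · intro a b h; simpa using h
  · intro a b h; simpa using h
  · simp [Finset.disjoint_left]; grind
  · simp [Finset.disjoint_left]; grind

lemma setOf_isSYT_eq_standardFillings (p m : ℕ) :
    {T | IsSYT ((p + 1 + 1) :: 2 :: List.replicate m 1) T} =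
      standardFillings (nearHookCells (p + 1) (m + 1)) (p + m + 4) := by
  ext T
  have hsum : ((p + 1 + 1) :: 2 :: List.replicate m 1).sum = p + m + 4 := by
    simp; ring
  simp only [mem_ofPred_eq, IsSYT, standardFillings, isCell_iff_mem_nearHookCells, hsum]
  constructor
  · rintro ⟨h0, hm, hi, hr, hd⟩
    have hmaps : MapsTo T (nearHookCells (p + 1) (m + 1)) (Icc 1 (p + m + 4)) := hm
    have hinj : InjOn T (nearHookCells (p + 1) (m + 1)) := fun x hx y hy h => hi x y hx hy h
    refine ⟨h0, ⟨hmaps, hinj, ?_⟩, hr, hd⟩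
    refine ((finite_Icc _ _).eq_of_subset_of_encard_le' hmaps.image_subset ?_).ge
    rw [hinj.encard_image, encard_nearHookCells, ← Finset.coe_Icc, encard_coe_eq_coe_finsetCard]
    simp
  · rintro ⟨h0, hb, hr, hd⟩
    exact ⟨h0, fun c hc => hb.mapsTo hc, fun c c' hc hc' h => hb.injOn hc hc' h, hr, hd⟩

lemma sytCount_nearHook (p m : ℕ) :
    (sytCount ((p + 1 + 1) :: 2 :: List.replicate m 1) : ℚ) = nearHookCount p m := by
  obtain ⟨k, hk, hk'⟩ := encard_standardFillings_nearHookCells p m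
  rw [← hk', sytCount]
  change ((Nat.card {T | IsSYT ((p + 1 + 1) :: 2 :: List.replicate m 1) T} : ℕ) : ℚ) = k
  rw [setOf_isSYT_eq_standardFillings, Nat.card_coe_set_eq, ncard, hk, ENat.toNat_natCast]

lemma nearHookCount_eq (p m : ℕ) : nearHookCount p m =
    ((p + m + 4).choose (p + 2) : ℚ) * ((p + 1) * (m + 1)) / (p + m + 3) := by
  have h1 := choose_left_shift p m
  have h2 := choose_right_shift (p + 1) m
  rw [show p + 1 + (m + 1) + 2 = p + m + 4 by ring, show p + 1 + 1 = p + 2 from rfl,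
    ← eq_div_iff (by positivity)] at h2
  rw [← eq_div_iff (by positivity)] at h1
  rw [nearHookCount, h2, h1]
  push_cast
  field_simp
  ring

end StandardFillings

/-- For `n ≥ 5` and `1 ≤ d ≤ n - 3`, the number of standard Young tableaux of shape
`(d+1, 2, 1^(n-d-3))` equals `C(n, d+1) * d * (n-d-2) / (n-1)`. -/
theorem syt_betti_count (n d : ℕ) (hn : 5 ≤ n) (hd1 : 1 ≤ d) (hd2 : d ≤ n - 3) :
    (sytCount ((d + 1) :: 2 :: List.replicate (n - d - 3) 1) : ℚ) =
      (n.choose (d + 1) : ℚ) * ((d : ℚ) * ((n : ℚ) - d - 2)) / ((n : ℚ) - 1) := by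
  obtain ⟨p, rfl⟩ : ∃ p, d = p + 1 := ⟨d - 1, by omega⟩
  obtain ⟨m, rfl⟩ : ∃ m, n = p + m + 4 := ⟨n - p - 4, by omega⟩
  rw [show p + m + 4 - (p + 1) - 3 = m by omega, sytCount_nearHook, nearHookCount_eq]
  push_cast
  congr 1 <;> ring
end

section
/- For n ≥ 5 and 1 ≤ d ≤ n-3, the total Betti number β_d of R/J_n, where J_n is the Stanley-Reisner ideal of the n-cycle over a field K, equals the number of standard Young tableaux of shape (d+1, 2, 1^(n-d-3)). -/
/-- The Stanley–Reisner ideal `J n` of the `n`-cycle: the ideal of `K[x₀, …, x_{n-1}]`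
generated by the monomials `xᵢxⱼ` over all diagonals `{i, j}` of the `n`-cycle. -/
noncomputable def cycleIdeal (n : ℕ) (K : Type) [Field K] :
    Ideal (MvPolynomial (Fin n) K) :=
  Ideal.span {m | ∃ i j : Fin n, i ≠ j ∧ ¬ cycAdj n i j ∧
    m = MvPolynomial.X i * MvPolynomial.X j}

/-- A minimal free resolution of the `MvPolynomial (Fin n) K`-module `M`:
free modules `Fᵈ = Rᵇ⁽ᵈ⁾` with differentials `φ d : F^{d+1} → F^d`, an augmentation
`ε : F⁰ → M`, exactness, and minimality (all matrix entries of the differentials lie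
in the maximal/irrelevant ideal, i.e. have zero constant coefficient). The rank `b d`
is then the `d`-th total Betti number `β_d(M)`. -/
structure MinimalFreeResolution (n : ℕ) (K : Type) [Field K]
    (M : Type) [AddCommGroup M] [Module (MvPolynomial (Fin n) K) M] where
  b : ℕ → ℕ
  φ : ∀ d : ℕ, (Fin (b (d + 1)) →₀ MvPolynomial (Fin n) K) →ₗ[MvPolynomial (Fin n) K]
        (Fin (b d) →₀ MvPolynomial (Fin n) K)
  ε : (Fin (b 0) →₀ MvPolynomial (Fin n) K) →ₗ[MvPolynomial (Fin n) K] M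
  surj : Function.Surjective ε
  exact_zero : LinearMap.ker ε = LinearMap.range (φ 0)
  exact_succ : ∀ d, LinearMap.ker (φ d) = LinearMap.range (φ (d + 1))
  minimal : ∀ d (i : Fin (b (d + 1))) (j : Fin (b d)),
    MvPolynomial.constantCoeff (φ d (Finsupp.single i 1) j) = 0

/-! ### The Koszul complex -/

section Koszul

variable {R : Type} [CommRing R] {n : ℕ}

/-- The sign attached to inserting `i` into the sorted set `T`. -/
def koszulSign (R : Type) [CommRing R] {n : ℕ} (i : Fin n) (T : Finset (Fin n)) : R :=
  (-1) ^ (T.filter (· < i)).card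

lemma koszulSign_insert {i j : Fin n} {T : Finset (Fin n)} (hj : j ∉ T) :
    koszulSign R i (insert j T) = (if j < i then -1 else 1) * koszulSign R i T := by
  unfold koszulSign
  rw [Finset.filter_insert]
  split_ifs with h
  · rw [Finset.card_insert_of_notMem (by simp [hj]), pow_succ']
  · simp

lemma koszulSign_erase {i j : Fin n} {T : Finset (Fin n)} (hj : j ∈ T) :
    koszulSign R i (T.erase j) = (if j < i then -1 else 1) * koszulSign R i T := by
  have h := koszulSign_insert (R := R) (i := i) (Finset.notMem_erase j T)
  rw [Finset.insert_erase hj] at h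
  rw [h]
  split_ifs <;> simp

lemma koszulSign_mul_self (i : Fin n) (T : Finset (Fin n)) :
    koszulSign R i T * koszulSign R i T = 1 := by
  unfold koszulSign
  rw [← mul_pow]
  simp


variable {N : Type} [AddCommGroup N] [Module R N]

variable (R N) in
/-- Contraction with the `i`-th dual basis vector. -/
def annihilate (i : Fin n) : (Finset (Fin n) → N) →ₗ[R] (Finset (Fin n) → N) where
  toFun f T := if i ∈ T then 0 else koszulSign R i T • f (insert i T)
  map_add' f g := by ext T; by_cases h : i ∈ T <;> simp [h]
  map_smul' r f := by ext T; by_cases h : i ∈ T <;> simp [h, smul_comm r]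

variable (R N) in
/-- Exterior multiplication by the `i`-th basis vector. -/
def create (i : Fin n) : (Finset (Fin n) → N) →ₗ[R] (Finset (Fin n) → N) where
  toFun f T := if i ∈ T then koszulSign R i T • f (T.erase i) else 0
  map_add' f g := by ext T; by_cases h : i ∈ T <;> simp [h]
  map_smul' r f := by ext T; by_cases h : i ∈ T <;> simp [h, smul_comm r]

lemma annihilate_apply (i : Fin n) (f : Finset (Fin n) → N) (T : Finset (Fin n)) :
    annihilate R N i f T = if i ∈ T then 0 else koszulSign R i T • f (insert i T) := rfl

lemma create_apply (i : Fin n) (f : Finset (Fin n) → N) (T : Finset (Fin n)) :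
    create R N i f T = if i ∈ T then koszulSign R i T • f (T.erase i) else 0 := rfl

lemma annihilate_self (i : Fin n) (f : Finset (Fin n) → N) :
    annihilate R N i (annihilate R N i f) = 0 := by
  ext T
  simp [annihilate_apply]

lemma annihilate_swap {i j : Fin n} (hij : i ≠ j) (f : Finset (Fin n) → N) :
    annihilate R N i (annihilate R N j f) = -annihilate R N j (annihilate R N i f) := by
  ext T
  by_cases hi : i ∈ T
  · simp [annihilate_apply, hi]
  by_cases hj : j ∈ T
  · simp [annihilate_apply, hj]
  simp only [annihilate_apply, Pi.neg_apply, hi, hj, Finset.mem_insert, hij, hij.symm, or_false,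
    if_false, koszulSign_insert hi, koszulSign_insert hj, Finset.insert_comm j i, smul_smul]
  rcases lt_or_gt_of_ne hij with h | h <;> simp [h, h.not_gt, mul_comm]

lemma annihilate_create_self (i : Fin n) (f : Finset (Fin n) → N) :
    annihilate R N i (create R N i f) + create R N i (annihilate R N i f) = f := by
  ext T
  by_cases hi : i ∈ T
  · simp [annihilate_apply, create_apply, hi, koszulSign_erase hi, smul_smul,
      koszulSign_mul_self]
  · simp [annihilate_apply, create_apply, hi, koszulSign_insert hi, smul_smul,
      koszulSign_mul_self]

lemma annihilate_create_of_ne {i j : Fin n} (hij : i ≠ j) (f : Finset (Fin n) → N) :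
    annihilate R N i (create R N j f) + create R N j (annihilate R N i f) = 0 := by
  ext T
  by_cases hi : i ∈ T
  · simp [annihilate_apply, create_apply, hi, hij]
  by_cases hj : j ∈ T
  · simp only [annihilate_apply, create_apply, Pi.add_apply, hi, hj, Finset.mem_insert,
      Finset.mem_erase, or_true, if_true, if_false, and_false,
      koszulSign_insert hi, koszulSign_erase hj, smul_smul,
      Finset.erase_insert_of_ne hij]
    rcases lt_or_gt_of_ne hij with h | h <;> simp [h, h.not_gt, mul_comm]
  · simp [annihilate_apply, create_apply, hj, hij.symm]

variable (N) in
/-- The Koszul differential for the sequence `x`. -/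
def koszulD (x : Fin n → R) : (Finset (Fin n) → N) →ₗ[R] (Finset (Fin n) → N) :=
  ∑ i, x i • annihilate R N i

lemma koszulD_eq (x : Fin n → R) (f : Finset (Fin n) → N) :
    koszulD N x f = ∑ i, x i • annihilate R N i f := by
  simp [koszulD]

lemma koszulD_apply (x : Fin n → R) (f : Finset (Fin n) → N) (T : Finset (Fin n)) :
    koszulD N x f T =
      ∑ i, if i ∈ T then 0 else (x i * koszulSign R i T) • f (insert i T) := by
  rw [koszulD_eq, Finset.sum_apply]
  refine Finset.sum_congr rfl fun i _ => ?_
  simp only [Pi.smul_apply, annihilate_apply]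
  split_ifs <;> simp [mul_smul]

lemma koszulD_koszulD (x : Fin n → R) (f : Finset (Fin n) → N) :
    koszulD N x (koszulD N x f) = 0 := by
  simp only [koszulD_eq, map_sum, map_smul, Finset.smul_sum]
  rw [← Finset.sum_product']
  refine Finset.sum_involution (fun p _ => (p.2, p.1)) ?_ ?_ ?_ ?_
  · rintro ⟨i, j⟩ _
    by_cases hij : i = j
    · subst hij
      simp [annihilate_self]
    · simp [annihilate_swap hij, smul_comm (x i) (x j)]
  · rintro ⟨i, j⟩ _ h heq
    simp only [Prod.mk.injEq] at heq
    obtain ⟨rfl, -⟩ := heq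
    simp [annihilate_self] at h
  · simp
  · simp

lemma koszulD_create (x : Fin n → R) (i : Fin n) (f : Finset (Fin n) → N) :
    koszulD N x (create R N i f) + create R N i (koszulD N x f) = x i • f := by
  simp only [koszulD_eq, map_sum, map_smul]
  rw [← Finset.sum_add_distrib, Finset.sum_eq_single i]
  · rw [← smul_add, annihilate_create_self]
  · intro j _ hj
    rw [← smul_add, annihilate_create_of_ne hj, smul_zero]
  · simp

lemma koszulD_comp {N' : Type} [AddCommGroup N'] [Module R N'] (x : Fin n → R) (g : N →ₗ[R] N')
    (f : Finset (Fin n) → N) : koszulD N' x (g ∘ f) = g ∘ koszulD N x f := by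
  ext T
  simp only [koszulD_apply, Function.comp_apply, map_sum]
  refine Finset.sum_congr rfl fun i _ => ?_
  split_ifs <;> simp

variable (R N) in
/-- The chains of homological degree `d`. -/
def koszulDegree (n d : ℕ) : Submodule R (Finset (Fin n) → N) where
  carrier := {f | ∀ S, S.card ≠ d → f S = 0}
  add_mem' hf hg S hS := by simp [hf S hS, hg S hS]
  zero_mem' S _ := rfl
  smul_mem' r f hf S hS := by simp [hf S hS]

lemma comp_mem_koszulDegree {N' : Type} [AddCommGroup N'] [Module R N'] {d : ℕ}
    {f : Finset (Fin n) → N} (hf : f ∈ koszulDegree R N n d) (g : N →ₗ[R] N') :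
    g ∘ f ∈ koszulDegree R N' n d := fun S hS => by simp [hf S hS]

lemma koszulD_mem_koszulDegree (x : Fin n → R) {d : ℕ} {f : Finset (Fin n) → N}
    (hf : f ∈ koszulDegree R N n (d + 1)) : koszulD N x f ∈ koszulDegree R N n d := by
  intro S hS
  rw [koszulD_apply]
  refine Finset.sum_eq_zero fun i _ => ?_
  split_ifs with hi
  · rfl
  · rw [hf _ (by rw [Finset.card_insert_of_notMem hi]; omega), smul_zero]

/-- The component of homological degree `d` of a chain. -/
def degreePart (d : ℕ) (f : Finset (Fin n) → N) : Finset (Fin n) → N :=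
  fun S => if S.card = d then f S else 0

lemma degreePart_apply (d : ℕ) (f : Finset (Fin n) → N) (S : Finset (Fin n)) :
    degreePart d f S = if S.card = d then f S else 0 := rfl

lemma degreePart_mem (d : ℕ) (f : Finset (Fin n) → N) :
    degreePart d f ∈ koszulDegree R N n d := fun S hS => by simp [degreePart_apply, hS]

lemma degreePart_eq_self {d : ℕ} {f : Finset (Fin n) → N} (hf : f ∈ koszulDegree R N n d) :
    degreePart d f = f := by
  ext S
  rw [degreePart_apply]
  split_ifs with h
  · rfl
  · exact (hf S h).symm

lemma koszulD_degreePart (x : Fin n → R) (d : ℕ) (f : Finset (Fin n) → N) :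
    koszulD N x (degreePart (d + 1) f) = degreePart d (koszulD N x f) := by
  ext S
  rw [degreePart_apply, koszulD_apply, koszulD_apply]
  split_ifs with h
  · refine Finset.sum_congr rfl fun i _ => ?_
    split_ifs with hi
    · rfl
    · rw [degreePart_apply, Finset.card_insert_of_notMem hi, if_pos (by omega)]
  · refine Finset.sum_eq_zero fun i _ => ?_
    split_ifs with hi
    · rfl
    · rw [degreePart_apply, Finset.card_insert_of_notMem hi, if_neg (by omega), smul_zero]

lemma exists_koszulDegree_of_mem_range {x : Fin n → R} {d : ℕ} {z : Finset (Fin n) → N}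
    (hz : z ∈ koszulDegree R N n d) (h : z ∈ LinearMap.range (koszulD N x)) :
    ∃ y ∈ koszulDegree R N n (d + 1), koszulD N x y = z := by
  obtain ⟨y, rfl⟩ := h
  exact ⟨degreePart (d + 1) y, degreePart_mem _ _, by
    rw [koszulD_degreePart, degreePart_eq_self hz]⟩

variable (N) in
/-- The Koszul cycles of degree `d`. -/
def koszulCycles (x : Fin n → R) (d : ℕ) : Submodule R (Finset (Fin n) → N) :=
  koszulDegree R N n d ⊓ LinearMap.ker (koszulD N x)

variable (N) in
/-- The Koszul homology of `N` with respect to `x` in degree `d`. -/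
def KoszulHomology (x : Fin n → R) (d : ℕ) : Type :=
  koszulCycles N x d ⧸ (LinearMap.range (koszulD N x)).comap (koszulCycles N x d).subtype

instance (x : Fin n → R) (d : ℕ) : AddCommGroup (KoszulHomology N x d) :=
  inferInstanceAs (AddCommGroup
    (koszulCycles N x d ⧸ (LinearMap.range (koszulD N x)).comap (koszulCycles N x d).subtype))

instance (x : Fin n → R) (d : ℕ) : Module R (KoszulHomology N x d) :=
  inferInstanceAs (Module R
    (koszulCycles N x d ⧸ (LinearMap.range (koszulD N x)).comap (koszulCycles N x d).subtype))

lemma mem_koszulCycles {x : Fin n → R} {d : ℕ} {z : Finset (Fin n) → N} :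
    z ∈ koszulCycles N x d ↔ z ∈ koszulDegree R N n d ∧ koszulD N x z = 0 := by
  simp [koszulCycles]

lemma comp_mem_koszulCycles {N' : Type} [AddCommGroup N'] [Module R N'] {x : Fin n → R} {d : ℕ}
    {z : Finset (Fin n) → N} (hz : z ∈ koszulCycles N x d) (g : N →ₗ[R] N') :
    g ∘ z ∈ koszulCycles N' x d := by
  rw [mem_koszulCycles] at hz ⊢
  refine ⟨comp_mem_koszulDegree hz.1 g, ?_⟩
  rw [koszulD_comp, hz.2]
  ext
  simp

lemma comp_mem_range_koszulD {N' : Type} [AddCommGroup N'] [Module R N'] {x : Fin n → R}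
    {z : Finset (Fin n) → N} (hz : z ∈ LinearMap.range (koszulD N x)) (g : N →ₗ[R] N') :
    g ∘ z ∈ LinearMap.range (koszulD N' x) := by
  obtain ⟨y, rfl⟩ := hz
  exact ⟨g ∘ y, koszulD_comp x g y⟩

variable (N) in
/-- The homology class of a cycle. -/
def koszulClass (x : Fin n → R) (d : ℕ) : koszulCycles N x d →ₗ[R] KoszulHomology N x d :=
  Submodule.mkQ _

lemma koszulClass_surjective (x : Fin n → R) (d : ℕ) :
    Function.Surjective (koszulClass N x d) := Submodule.mkQ_surjective _

lemma koszulClass_eq_zero {x : Fin n → R} {d : ℕ} {z : koszulCycles N x d} :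
    koszulClass N x d z = 0 ↔ z.1 ∈ LinearMap.range (koszulD N x) := by
  refine (Submodule.Quotient.mk_eq_zero
    ((LinearMap.range (koszulD N x)).comap (koszulCycles N x d).subtype)).trans ?_
  rfl

/-- The map on cycles induced by a linear map. -/
def koszulCyclesMap {N' : Type} [AddCommGroup N'] [Module R N'] (x : Fin n → R) (d : ℕ)
    (g : N →ₗ[R] N') : koszulCycles N x d →ₗ[R] koszulCycles N' x d :=
  (g.compLeft (Finset (Fin n))).restrict fun _ hz => comp_mem_koszulCycles hz g

lemma coe_koszulCyclesMap {N' : Type} [AddCommGroup N'] [Module R N'] (x : Fin n → R) (d : ℕ)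
    (g : N →ₗ[R] N') (z : koszulCycles N x d) :
    (koszulCyclesMap x d g z : Finset (Fin n) → N') = g ∘ (z : Finset (Fin n) → N) := rfl

/-- The map on Koszul homology induced by a linear map. -/
def koszulHomologyMap {N' : Type} [AddCommGroup N'] [Module R N'] (x : Fin n → R) (d : ℕ)
    (g : N →ₗ[R] N') : KoszulHomology N x d →ₗ[R] KoszulHomology N' x d :=
  Submodule.mapQ _ _ (koszulCyclesMap x d g) fun _ hz => comp_mem_range_koszulD hz g

lemma koszulHomologyMap_class {N' : Type} [AddCommGroup N'] [Module R N'] (x : Fin n → R) (d : ℕ)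
    (g : N →ₗ[R] N') (z : koszulCycles N x d) :
    koszulHomologyMap x d g (koszulClass N x d z) = koszulClass N' x d (koszulCyclesMap x d g z) := rfl

lemma koszulHomologyMap_injective {N' : Type} [AddCommGroup N'] [Module R N'] {x : Fin n → R}
    {d : ℕ} {g : N →ₗ[R] N'}
    (h : ∀ z ∈ koszulCycles N x d, g ∘ z ∈ LinearMap.range (koszulD N' x) →
      z ∈ LinearMap.range (koszulD N x)) :
    Function.Injective (koszulHomologyMap x d g) := by
  rw [injective_iff_map_eq_zero]
  intro a ha
  obtain ⟨z, rfl⟩ := koszulClass_surjective x d a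
  rw [koszulHomologyMap_class, koszulClass_eq_zero, coe_koszulCyclesMap] at ha
  exact koszulClass_eq_zero.2 (h z z.2 ha)

lemma koszulHomologyMap_surjective {N' : Type} [AddCommGroup N'] [Module R N'] {x : Fin n → R}
    {d : ℕ} {g : N →ₗ[R] N'}
    (h : ∀ z ∈ koszulCycles N' x d, ∃ y ∈ koszulCycles N x d,
      z - g ∘ y ∈ LinearMap.range (koszulD N' x)) :
    Function.Surjective (koszulHomologyMap x d g) := by
  intro a
  obtain ⟨z, rfl⟩ := koszulClass_surjective x d a
  obtain ⟨y, hy, hzy⟩ := h z z.2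
  refine ⟨koszulClass N x d ⟨y, hy⟩, ?_⟩
  rw [koszulHomologyMap_class, eq_comm, ← sub_eq_zero, ← map_sub, koszulClass_eq_zero]
  exact hzy

section ShortExact

variable {A B C : Type} [AddCommGroup A] [Module R A] [AddCommGroup B] [Module R B]
  [AddCommGroup C] [Module R C] {f : A →ₗ[R] B} {g : B →ₗ[R] C}

lemma exists_comp_eq_of_surjective (hg : Function.Surjective g) {d : ℕ} {c : Finset (Fin n) → C}
    (hc : c ∈ koszulDegree R C n d) : ∃ b ∈ koszulDegree R B n d, g ∘ b = c := by
  obtain ⟨b, hb⟩ := hg.comp_left c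
  refine ⟨degreePart d b, degreePart_mem _ _, ?_⟩
  rw [← degreePart_eq_self hc, ← hb]
  ext S
  simp only [degreePart_apply, Function.comp_apply]
  split_ifs <;> simp

lemma exists_comp_eq_of_exact (hfg : Function.Exact f g) {d : ℕ} {b : Finset (Fin n) → B}
    (hb : b ∈ koszulDegree R B n d) (h : g ∘ b = 0) :
    ∃ a ∈ koszulDegree R A n d, f ∘ a = b := by
  choose a ha using fun S => (hfg (b S)).1 (congrFun h S)
  refine ⟨degreePart d a, degreePart_mem _ _, ?_⟩
  rw [← degreePart_eq_self hb]
  ext S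
  simp only [degreePart_apply, Function.comp_apply]
  split_ifs <;> simp [ha]

lemma exists_eq_add_of_comp_mem_range (hg : Function.Surjective g) (hfg : Function.Exact f g)
    {x : Fin n → R} {d : ℕ} {y : Finset (Fin n) → B} (hy : y ∈ koszulDegree R B n d)
    (h : g ∘ y ∈ LinearMap.range (koszulD C x)) :
    ∃ a ∈ koszulDegree R A n d, ∃ b, y = koszulD B x b + f ∘ a := by
  obtain ⟨c, hc, hcy⟩ := exists_koszulDegree_of_mem_range (comp_mem_koszulDegree hy g) h
  obtain ⟨b, hb, rfl⟩ := exists_comp_eq_of_surjective hg hc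
  obtain ⟨a, ha, hab⟩ := exists_comp_eq_of_exact hfg (b := y - koszulD B x b)
    (sub_mem hy (koszulD_mem_koszulDegree x hb)) (by
      rw [koszulD_comp] at hcy
      ext S
      have := congrFun hcy S
      simp only [Function.comp_apply] at this
      simp [this])
  exact ⟨a, ha, b, by rw [hab]; abel⟩

lemma length_eq_add_of_ker_le {Q : Type} [AddCommGroup Q] [Module R Q] {α : Q →ₗ[R] C}
    {β : Q →ₗ[R] A} {i : B →ₗ[R] C} (hα : Function.Surjective α) (hβ : Function.Surjective β)
    (hi : Function.Injective i) (hle : ∀ q, α q = 0 → β q = 0)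
    (h₁ : ∀ q, β q = 0 → ∃ b, i b = α q) (h₂ : ∀ b, ∃ q, β q = 0 ∧ i b = α q) :
    Module.length R C = Module.length R B + Module.length R A := by
  let δ : C →ₗ[R] A :=
    (LinearMap.ker α).liftQ β (fun q hq => hle q hq) ∘ₗ (α.quotKerEquivOfSurjective hα).symm.toLinearMap
  have hδ (p : Q) : δ (α p) = β p := by
    have : (α.quotKerEquivOfSurjective hα).symm (α p) = Submodule.Quotient.mk p := by
      rw [LinearEquiv.symm_apply_eq]
      rfl
    simp only [δ, LinearMap.comp_apply, LinearEquiv.coe_coe, this]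
    rfl
  refine Module.length_eq_add_of_exact i δ hi ?_ ?_
  · intro a
    obtain ⟨p, rfl⟩ := hβ a
    exact ⟨α p, hδ p⟩
  · intro c
    constructor
    · obtain ⟨p, rfl⟩ := hα c
      rw [hδ]
      exact h₁ p
    · rintro ⟨b, rfl⟩
      obtain ⟨q, hq, hqb⟩ := h₂ b
      rw [hqb, hδ, hq]

/-- If `H_d(A) → H_d(B)` vanishes and `H_{d+1}(B) → H_{d+1}(C)` is injective, then the long exact
sequence of Koszul homology splits off `0 → H_{d+1}(B) → H_{d+1}(C) → H_d(A) → 0`. -/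
theorem length_koszulHomology_succ (hf : Function.Injective f) (hg : Function.Surjective g)
    (hfg : Function.Exact f g) (x : Fin n → R) (d : ℕ)
    (hA : ∀ z ∈ koszulCycles A x d, f ∘ z ∈ LinearMap.range (koszulD B x))
    (hB : ∀ y ∈ koszulCycles B x (d + 1), g ∘ y ∈ LinearMap.range (koszulD C x) →
      y ∈ LinearMap.range (koszulD B x)) :
    Module.length R (KoszulHomology C x (d + 1)) =
      Module.length R (KoszulHomology B x (d + 1)) + Module.length R (KoszulHomology A x d) := by
  obtain ⟨Q, hQ⟩ : ∃ Q : Submodule R (koszulDegree R B n (d + 1) × koszulCycles A x d),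
      ∀ p, p ∈ Q ↔ koszulD B x p.1.1 = f ∘ p.2.1 := by
    refine ⟨LinearMap.ker ((koszulD B x ∘ₗ (koszulDegree R B n (d + 1)).subtype).coprod
      (-(f.compLeft _ ∘ₗ (koszulCycles A x d).subtype))), fun p => ?_⟩
    rw [LinearMap.mem_ker, LinearMap.coprod_apply]
    simp only [LinearMap.comp_apply, LinearMap.neg_apply, Submodule.subtype_apply]
    rw [← sub_eq_add_neg, sub_eq_zero]
    rfl
  have hgf (a : Finset (Fin n) → A) : g ∘ f ∘ a = 0 := by
    ext S
    simp [hfg.apply_apply_eq_zero]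
  have hQc (p : Q) : g ∘ p.1.1.1 ∈ koszulCycles C x (d + 1) := by
    rw [mem_koszulCycles]
    refine ⟨comp_mem_koszulDegree p.1.1.2 g, ?_⟩
    rw [koszulD_comp, (hQ _).1 p.2, hgf]
  obtain ⟨α, hαQ⟩ : ∃ α : Q →ₗ[R] KoszulHomology C x (d + 1),
      ∀ p : Q, α p = koszulClass C x (d + 1) ⟨g ∘ p.1.1.1, hQc p⟩ :=
    ⟨koszulClass C x (d + 1) ∘ₗ (LinearMap.codRestrict _ (g.compLeft _ ∘ₗ
      (koszulDegree R B n (d + 1)).subtype ∘ₗ LinearMap.fst R _ _ ∘ₗ Q.subtype) hQc),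
      fun _ => rfl⟩
  obtain ⟨β, hβQ⟩ : ∃ β : Q →ₗ[R] KoszulHomology A x d, ∀ p : Q, β p = koszulClass A x d p.1.2 :=
    ⟨koszulClass A x d ∘ₗ LinearMap.snd R _ _ ∘ₗ Q.subtype, fun _ => rfl⟩
  have hα0 (p : Q) : α p = 0 ↔ g ∘ p.1.1.1 ∈ LinearMap.range (koszulD C x) := by
    rw [hαQ, koszulClass_eq_zero]
  have hβ0 (p : Q) : β p = 0 ↔ p.1.2.1 ∈ LinearMap.range (koszulD A x) := by
    rw [hβQ, koszulClass_eq_zero]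
  have hα : Function.Surjective α := by
    intro c
    obtain ⟨⟨c, hc⟩, rfl⟩ := koszulClass_surjective x (d + 1) c
    obtain ⟨hc1, hc2⟩ := mem_koszulCycles.1 hc
    obtain ⟨b, hb, rfl⟩ := exists_comp_eq_of_surjective hg hc1
    rw [koszulD_comp] at hc2
    obtain ⟨a, ha, hab⟩ := exists_comp_eq_of_exact hfg (koszulD_mem_koszulDegree x hb) hc2
    refine ⟨⟨(⟨b, hb⟩, ⟨a, mem_koszulCycles.2 ⟨ha, ?_⟩⟩), (hQ _).2 hab.symm⟩, hαQ _⟩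
    apply hf.comp_left
    dsimp only
    have : f ∘ koszulD A x a = 0 := by rw [← koszulD_comp, hab, koszulD_koszulD]
    rw [this]
    ext
    simp
  have hβ : Function.Surjective β := by
    intro a
    obtain ⟨⟨a, ha⟩, rfl⟩ := koszulClass_surjective x d a
    obtain ⟨b, hb, hab⟩ := exists_koszulDegree_of_mem_range
      (comp_mem_koszulDegree (mem_koszulCycles.1 ha).1 f) (hA a ha)
    exact ⟨⟨(⟨b, hb⟩, ⟨a, ha⟩), (hQ _).2 hab⟩, hβQ _⟩
  have hle : ∀ p, α p = 0 → β p = 0 := by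
    intro p hp
    rw [hα0] at hp
    rw [hβ0]
    obtain ⟨a, -, b, hab⟩ := exists_eq_add_of_comp_mem_range hg hfg p.1.1.2 hp
    refine ⟨a, hf.comp_left ?_⟩
    dsimp only
    rw [← (hQ _).1 p.2, hab, map_add, koszulD_koszulD, zero_add, koszulD_comp]
  refine length_eq_add_of_ker_le (Q := Q) (α := α) (β := β) hα hβ
    (koszulHomologyMap_injective hB) hle ?_ ?_
  · intro p hp
    rw [hβ0] at hp
    obtain ⟨a, ha, hap⟩ := exists_koszulDegree_of_mem_range (mem_koszulCycles.1 p.1.2.2).1 hp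
    refine ⟨koszulClass B x (d + 1) ⟨p.1.1.1 - f ∘ a, mem_koszulCycles.2
      ⟨sub_mem p.1.1.2 (comp_mem_koszulDegree ha f), ?_⟩⟩, ?_⟩
    · rw [map_sub, koszulD_comp, hap, (hQ _).1 p.2, sub_self]
    · rw [koszulHomologyMap_class, hαQ]
      refine congrArg (koszulClass C x (d + 1)) (Subtype.ext ?_)
      rw [coe_koszulCyclesMap]
      ext S
      have := congrFun (hgf a) S
      simp only [Function.comp_apply, Pi.zero_apply] at this
      simp [this]
  · intro b
    obtain ⟨⟨b, hb⟩, rfl⟩ := koszulClass_surjective x (d + 1) b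
    obtain ⟨hb1, hb2⟩ := mem_koszulCycles.1 hb
    refine ⟨⟨(⟨b, hb1⟩, 0), (hQ _).2 ?_⟩, ?_, ?_⟩
    · rw [hb2]
      ext
      simp
    · rw [hβ0]
      exact zero_mem _
    · rw [hαQ, koszulHomologyMap_class]
      rfl

/-- If `H_{d+1}(B) → H_{d+1}(C)` and `H_d(B) → H_d(C)` are surjective, then the long exact
sequence of Koszul homology splits off `0 → H_d(A) → H_d(B) → H_d(C) → 0`. -/
theorem length_koszulHomology_of_surjective (hf : Function.Injective f)
    (hfg : Function.Exact f g) (hg : Function.Surjective g) (x : Fin n → R) (d : ℕ)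
    (hsucc : ∀ z ∈ koszulCycles C x (d + 1), ∃ y ∈ koszulCycles B x (d + 1),
      z - g ∘ y ∈ LinearMap.range (koszulD C x))
    (hd : ∀ z ∈ koszulCycles C x d, ∃ y ∈ koszulCycles B x d,
      z - g ∘ y ∈ LinearMap.range (koszulD C x)) :
    Module.length R (KoszulHomology B x d) =
      Module.length R (KoszulHomology A x d) + Module.length R (KoszulHomology C x d) := by
  have hgf (a : Finset (Fin n) → A) : g ∘ f ∘ a = 0 := by
    ext S
    simp [hfg.apply_apply_eq_zero]
  refine Module.length_eq_add_of_exact (koszulHomologyMap x d f) (koszulHomologyMap x d g)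
    (koszulHomologyMap_injective ?_) (koszulHomologyMap_surjective hd) ?_
  · intro z hz hfz
    obtain ⟨b, hb, hbz⟩ := exists_koszulDegree_of_mem_range
      (comp_mem_koszulDegree (mem_koszulCycles.1 hz).1 f) hfz
    obtain ⟨y, hy, hyb⟩ := hsucc (g ∘ b) (mem_koszulCycles.2 ⟨comp_mem_koszulDegree hb g, by
      rw [koszulD_comp, hbz, hgf]⟩)
    obtain ⟨hy1, hy2⟩ := mem_koszulCycles.1 hy
    have hyb' : g ∘ (b - y) ∈ LinearMap.range (koszulD C x) := by
      convert hyb using 1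
      ext S
      simp
    obtain ⟨a, -, c, hac⟩ := exists_eq_add_of_comp_mem_range hg hfg (sub_mem hb hy1) hyb'
    refine ⟨a, hf.comp_left ?_⟩
    dsimp only
    rw [← hbz, ← koszulD_comp, eq_sub_of_add_eq' hac.symm, map_sub, map_sub, koszulD_koszulD, hy2]
    simp
  · intro b
    obtain ⟨z, rfl⟩ := koszulClass_surjective x d b
    constructor
    · rw [koszulHomologyMap_class, koszulClass_eq_zero, coe_koszulCyclesMap]
      intro h
      obtain ⟨hz1, hz2⟩ := mem_koszulCycles.1 z.2
      obtain ⟨a, ha, c, hac⟩ := exists_eq_add_of_comp_mem_range hg hfg hz1 h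
      have ha' : koszulD A x a = 0 := by
        apply hf.comp_left
        dsimp only
        rw [← koszulD_comp, eq_sub_of_add_eq' hac.symm, map_sub, hz2, koszulD_koszulD]
        ext
        simp
      refine ⟨koszulClass A x d ⟨a, mem_koszulCycles.2 ⟨ha, ha'⟩⟩, ?_⟩
      rw [koszulHomologyMap_class, ← sub_eq_zero, ← map_sub, koszulClass_eq_zero]
      refine ⟨-c, ?_⟩
      rw [map_neg, Submodule.coe_sub, hac, coe_koszulCyclesMap]
      abel
    · rintro ⟨a, ha⟩
      obtain ⟨a, rfl⟩ := koszulClass_surjective x d a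
      rw [← ha, koszulHomologyMap_class, koszulHomologyMap_class, koszulClass_eq_zero,
        coe_koszulCyclesMap, coe_koszulCyclesMap, hgf]
      exact zero_mem _

end ShortExact

end Koszul

/-! ### Koszul homology of quotients by variables -/

section Variables

open MvPolynomial

variable {n : ℕ} {K : Type} [Field K]

variable (K) in
/-- The ideal generated by the variables indexed by `A`. -/
noncomputable def varIdeal (A : Finset (Fin n)) : Ideal (MvPolynomial (Fin n) K) :=
  Ideal.span (X '' (A : Set (Fin n)))

lemma mem_varIdeal {A : Finset (Fin n)} {p : MvPolynomial (Fin n) K} :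
    p ∈ varIdeal K A ↔ ∀ m : Fin n →₀ ℕ, (∀ i ∈ A, m i = 0) → coeff m p = 0 := by
  rw [varIdeal, mem_ideal_span_X_image]
  constructor
  · intro h m hm
    by_contra hc
    obtain ⟨i, hi, hmi⟩ := h m (mem_support_iff.2 hc)
    exact hmi (hm i hi)
  · intro h m hm
    by_contra! hc
    exact mem_support_iff.1 hm (h m hc)

lemma varIdeal_mono {A B : Finset (Fin n)} (h : A ⊆ B) : varIdeal K A ≤ varIdeal K B :=
  Ideal.span_mono (Set.image_mono (by exact_mod_cast h))

lemma X_mem_varIdeal {A : Finset (Fin n)} {i : Fin n} (h : i ∈ A) :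
    (X i : MvPolynomial (Fin n) K) ∈ varIdeal K A :=
  Ideal.subset_span ⟨i, by exact_mod_cast h, rfl⟩

lemma mem_varIdeal_univ {p : MvPolynomial (Fin n) K} :
    p ∈ varIdeal K Finset.univ ↔ constantCoeff p = 0 := by
  rw [mem_varIdeal, constantCoeff_eq]
  constructor
  · intro h
    exact h 0 (by simp)
  · intro h m hm
    rwa [show m = 0 from Finsupp.ext fun i => hm i (Finset.mem_univ i)]

lemma mem_varIdeal_of_X_mul_mem {A : Finset (Fin n)} {i : Fin n} (hi : i ∉ A)
    {p : MvPolynomial (Fin n) K} (h : X i * p ∈ varIdeal K A) : p ∈ varIdeal K A := by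
  rw [mem_varIdeal] at h ⊢
  intro m hm
  rw [← coeff_X_mul m i p]
  refine h _ fun j hj => ?_
  have : i ≠ j := fun e => hi (e ▸ hj)
  simp [hm j hj, this]

variable (K) in
/-- The residue field of the irrelevant ideal, as a module. -/
abbrev ResidueModule (n : ℕ) : Type :=
  MvPolynomial (Fin n) K ⧸ varIdeal K (Finset.univ : Finset (Fin n))

lemma length_residueModule : Module.length (MvPolynomial (Fin n) K) (ResidueModule K n) = 1 := by
  have hker : varIdeal K (Finset.univ : Finset (Fin n)) =
      RingHom.ker (constantCoeff : MvPolynomial (Fin n) K →+* K) := by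
    ext p
    rw [mem_varIdeal_univ, RingHom.mem_ker]
  have : (varIdeal K (Finset.univ : Finset (Fin n))).IsMaximal := by
    rw [hker]
    exact RingHom.ker_isMaximal_of_surjective _ fun a => ⟨C a, by simp⟩
  rw [Module.length_eq_one_iff]
  exact (isSimpleModule_iff_isCoatom).2 this.out

lemma smul_residue_eq_zero {r : MvPolynomial (Fin n) K} (hr : r ∈ varIdeal K Finset.univ)
    (a : ResidueModule K n) : r • a = 0 := by
  obtain ⟨p, rfl⟩ := Submodule.Quotient.mk_surjective _ a
  rw [← Submodule.Quotient.mk_smul, Submodule.Quotient.mk_eq_zero]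
  exact Ideal.mul_mem_right p _ hr

variable (K) in
/-- Reduction of `R / (xᵢ : i ∈ A)` modulo the irrelevant ideal. -/
noncomputable def residue (A : Finset (Fin n)) :
    (MvPolynomial (Fin n) K ⧸ varIdeal K A) →ₗ[MvPolynomial (Fin n) K] ResidueModule K n :=
  Submodule.factor (varIdeal_mono (Finset.subset_univ A))

lemma residue_mk (A : Finset (Fin n)) (p : MvPolynomial (Fin n) K) :
    residue K A (Submodule.Quotient.mk p) = Submodule.Quotient.mk p := rfl

lemma residue_factor {A B : Finset (Fin n)} (h : A ⊆ B)
    (a : MvPolynomial (Fin n) K ⧸ varIdeal K A) :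
    residue K B (Submodule.factor (varIdeal_mono h) a) = residue K A a := by
  obtain ⟨p, rfl⟩ := Submodule.Quotient.mk_surjective _ a
  rfl

lemma koszulD_residueModule (z : Finset (Fin n) → ResidueModule K n) :
    koszulD (ResidueModule K n) (X : Fin n → MvPolynomial (Fin n) K) z = 0 := by
  ext S
  rw [koszulD_apply]
  refine Finset.sum_eq_zero fun i _ => ?_
  split_ifs
  · rfl
  · exact smul_residue_eq_zero (Ideal.mul_mem_right _ _ (X_mem_varIdeal (Finset.mem_univ i))) _

lemma residue_eq_zero_of_cycle {A : Finset (Fin n)} {i : Fin n} (hi : i ∉ A)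
    {z : Finset (Fin n) → MvPolynomial (Fin n) K ⧸ varIdeal K A}
    (hz : koszulD _ (X : Fin n → MvPolynomial (Fin n) K) z = 0) {S : Finset (Fin n)}
    (hS : i ∈ S) : residue K A (z S) = 0 := by
  choose p hp using fun S => Submodule.Quotient.mk_surjective _ (z S)
  have h := congrFun hz (S.erase i)
  rw [koszulD_apply] at h
  have h' : (∑ j, if j ∈ S.erase i then 0 else
      (X j * koszulSign (MvPolynomial (Fin n) K) j (S.erase i)) * p (insert j (S.erase i))) ∈
        varIdeal K A := by
    rw [← Submodule.Quotient.mk_eq_zero, ← Submodule.mkQ_apply, map_sum]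
    refine Eq.trans (Finset.sum_congr rfl fun j _ => ?_) h
    split_ifs
    · simp
    · rw [← hp]
      rfl
  rw [mem_varIdeal] at h'
  have h0 := h' (Finsupp.single i 1) fun j hj => by
    have : i ≠ j := fun e => hi (e ▸ hj)
    simp [this]
  rw [coeff_sum, Finset.sum_eq_single i] at h0
  · rw [if_neg (Finset.notMem_erase i S), Finset.insert_erase hS, mul_assoc, coeff_X_mul',
      if_pos (by simp), tsub_self, ← constantCoeff_eq, map_mul] at h0
    rw [← hp, residue_mk, Submodule.Quotient.mk_eq_zero, mem_varIdeal_univ]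
    refine (mul_eq_zero.1 h0).resolve_left ?_
    simp [koszulSign]
  · intro j _ hj
    split_ifs
    · simp
    · rw [mul_assoc, coeff_X_mul', if_neg]
      simpa using hj
  · simp

/-- A Koszul cycle with coefficients in `R / (xᵢ : i ∈ A)` whose relevant coefficients vanish at
the origin is a boundary. -/
theorem mem_range_koszulD_of_residue_eq_zero (A : Finset (Fin n))
    (z : Finset (Fin n) → MvPolynomial (Fin n) K ⧸ varIdeal K A)
    (hz : koszulD _ (X : Fin n → MvPolynomial (Fin n) K) z = 0)
    (h0 : ∀ S ⊆ A, residue K A (z S) = 0) :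
    z ∈ LinearMap.range (koszulD (MvPolynomial (Fin n) K ⧸ varIdeal K A)
      (X : Fin n → MvPolynomial (Fin n) K)) := by
  induction hk : Aᶜ.card generalizing A with
  | zero =>
    obtain rfl : A = Finset.univ := by simpa using hk
    have hz0 : z = 0 := by
      ext S
      obtain ⟨p, hp⟩ := Submodule.Quotient.mk_surjective _ (z S)
      have := h0 S (Finset.subset_univ S)
      rw [← hp] at this ⊢
      exact this
    rw [hz0]
    exact zero_mem _
  | succ k ih =>
    obtain ⟨i, hi⟩ : Aᶜ.Nonempty := by
      rw [← Finset.card_pos]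
      omega
    have hiA : i ∉ A := Finset.mem_compl.1 hi
    let q := Submodule.factor (varIdeal_mono (K := K) (Finset.subset_insert i A))
    obtain ⟨y', hy'⟩ := ih (insert i A) (q ∘ z) (by
      rw [koszulD_comp, hz]
      ext
      simp) (by
      intro S hS
      refine (residue_factor (Finset.subset_insert i A) (z S)).trans ?_
      by_cases hiS : i ∈ S
      · exact residue_eq_zero_of_cycle hiA hz hiS
      · exact h0 S ((Finset.subset_insert_iff_of_notMem hiS).1 hS)) (by
      rw [Finset.compl_insert, Finset.card_erase_of_mem hi, hk]
      rfl)
    have hq : Function.Surjective q := by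
      intro a
      obtain ⟨p, rfl⟩ := Submodule.Quotient.mk_surjective _ a
      exact ⟨Submodule.Quotient.mk p, rfl⟩
    obtain ⟨y, rfl⟩ := hq.comp_left y'
    have hw (S : Finset (Fin n)) : ∃ w : MvPolynomial (Fin n) K ⧸ varIdeal K A,
        z S - koszulD _ (X : Fin n → MvPolynomial (Fin n) K) y S = (X i : MvPolynomial (Fin n) K) • w := by
      obtain ⟨p, hp⟩ := Submodule.Quotient.mk_surjective _ (z S - koszulD _ (X : Fin n → MvPolynomial (Fin n) K) y S)
      have hqp : q (z S - koszulD _ (X : Fin n → MvPolynomial (Fin n) K) y S) = 0 := by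
        have := congrFun hy' S
        simp only at this
        rw [koszulD_comp] at this
        simp only [Function.comp_apply] at this
        rw [map_sub, this, sub_self]
      rw [← hp] at hqp ⊢
      have hpm : p ∈ varIdeal K (insert i A) := (Submodule.Quotient.mk_eq_zero _).1 hqp
      rw [varIdeal, Finset.coe_insert, Set.image_insert_eq, Ideal.span_insert,
        Submodule.mem_sup] at hpm
      obtain ⟨a, ha, b, hb, rfl⟩ := hpm
      obtain ⟨c, rfl⟩ := Ideal.mem_span_singleton'.1 ha
      have hb' : b ∈ varIdeal K A := hb
      refine ⟨Submodule.Quotient.mk c, ?_⟩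
      rw [Submodule.Quotient.mk_add, (Submodule.Quotient.mk_eq_zero _).2 hb', add_zero,
        ← Submodule.Quotient.mk_smul, smul_eq_mul, mul_comm]
    choose w hw using hw
    have hw' : z - koszulD _ (X : Fin n → MvPolynomial (Fin n) K) y = (X i : MvPolynomial (Fin n) K) • w := funext hw
    have hDw : koszulD _ (X : Fin n → MvPolynomial (Fin n) K) w = 0 := by
      have h1 : (X i : MvPolynomial (Fin n) K) • koszulD _ (X : Fin n → MvPolynomial (Fin n) K) w = 0 := by
        rw [← map_smul, ← hw', map_sub, hz, koszulD_koszulD, sub_zero]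
      ext S
      have h2 := congrFun h1 S
      obtain ⟨p, hp⟩ := Submodule.Quotient.mk_surjective _ (koszulD _ (X : Fin n → MvPolynomial (Fin n) K) w S)
      rw [Pi.smul_apply, ← hp, ← Submodule.Quotient.mk_smul, Pi.zero_apply,
        Submodule.Quotient.mk_eq_zero] at h2
      rw [← hp]
      exact (Submodule.Quotient.mk_eq_zero _).2 (mem_varIdeal_of_X_mul_mem hiA h2)
    refine ⟨y + create (MvPolynomial (Fin n) K) _ i w, ?_⟩
    have h3 := koszulD_create (X : Fin n → MvPolynomial (Fin n) K) i w
    rw [hDw, map_zero, add_zero] at h3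
    rw [map_add, h3, ← hw']
    abel

section Family

variable {ι : Type} (A : ι → Finset (Fin n))

/-- The chain with prescribed constant coefficients at the faces `S ⊆ A i`. -/
noncomputable def faceChain (c : ι → Finset (Fin n) → MvPolynomial (Fin n) K) :
    Finset (Fin n) → ∀ i, MvPolynomial (Fin n) K ⧸ varIdeal K (A i) :=
  fun S i => if S ⊆ A i then Submodule.Quotient.mk (c i S) else 0

lemma koszulD_faceChain (c : ι → Finset (Fin n) → MvPolynomial (Fin n) K) :
    koszulD _ (X : Fin n → MvPolynomial (Fin n) K) (faceChain A c) = 0 := by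
  ext T i
  rw [koszulD_apply, Finset.sum_apply]
  refine Finset.sum_eq_zero fun j _ => ?_
  split_ifs
  · rfl
  · rw [Pi.smul_apply, faceChain]
    split_ifs with h
    · rw [← Submodule.Quotient.mk_smul, Submodule.Quotient.mk_eq_zero, smul_eq_mul, mul_assoc]
      exact Ideal.mul_mem_right _ _ (X_mem_varIdeal (h (Finset.mem_insert_self j T)))
    · rw [smul_zero]

variable {A}

lemma residue_eq_zero_of_mem_range {z : Finset (Fin n) → ∀ i, MvPolynomial (Fin n) K ⧸ varIdeal K (A i)}
    (hz : z ∈ LinearMap.range (koszulD _ (X : Fin n → MvPolynomial (Fin n) K)))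
    (i : ι) (S : Finset (Fin n)) : residue K (A i) (z S i) = 0 := by
  have h := comp_mem_range_koszulD hz (residue K (A i) ∘ₗ LinearMap.proj i)
  obtain ⟨y, hy⟩ := h
  rw [koszulD_residueModule] at hy
  exact (congrFun hy S).symm

lemma mem_range_koszulD_pi {z : Finset (Fin n) → ∀ i, MvPolynomial (Fin n) K ⧸ varIdeal K (A i)}
    (hz : koszulD _ (X : Fin n → MvPolynomial (Fin n) K) z = 0)
    (h0 : ∀ i, ∀ S ⊆ A i, residue K (A i) (z S i) = 0) :
    z ∈ LinearMap.range (koszulD _ (X : Fin n → MvPolynomial (Fin n) K)) := by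
  have h (i : ι) := mem_range_koszulD_of_residue_eq_zero (A i) (fun S => z S i) (by
    have := koszulD_comp (X : Fin n → MvPolynomial (Fin n) K)
      (LinearMap.proj (φ := fun i => MvPolynomial (Fin n) K ⧸ varIdeal K (A i)) i) z
    rw [hz] at this
    exact this) (h0 i)
  choose y hy using h
  refine ⟨fun S i => y i S, ?_⟩
  ext S i
  rw [← congrFun (hy i) S]
  exact (congrFun (koszulD_comp (X : Fin n → MvPolynomial (Fin n) K)
    (LinearMap.proj (φ := fun i => MvPolynomial (Fin n) K ⧸ varIdeal K (A i)) i)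
      (fun S i => y i S)) S).symm

lemma faceChain_mem_koszulCycles (c : ι → Finset (Fin n) → MvPolynomial (Fin n) K) (d : ℕ)
    (hc : ∀ i S, S.card ≠ d → c i S = 0) :
    faceChain A c ∈ koszulCycles _ (X : Fin n → MvPolynomial (Fin n) K) d := by
  refine mem_koszulCycles.2 ⟨fun S hS => ?_, koszulD_faceChain A c⟩
  ext i
  simp [faceChain, hc i S hS]

lemma length_quotient_eq_of_surjective {R M P : Type} [CommRing R] [AddCommGroup M] [Module R M]
    [AddCommGroup P] [Module R P] {N : Submodule R M} (ρ : M →ₗ[R] P)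
    (hρ : Function.Surjective ρ) (hN : ∀ z, z ∈ N ↔ ρ z = 0) :
    Module.length R (M ⧸ N) = Module.length R P := by
  obtain rfl : N = LinearMap.ker ρ := Submodule.ext hN
  exact LinearEquiv.length_eq (ρ.quotKerEquivOfSurjective hρ)

variable (A) in
/-- The Koszul homology of a finite product of quotients by variables. -/
theorem length_koszulHomology_pi [Fintype ι] (d : ℕ) :
    Module.length (MvPolynomial (Fin n) K)
      (KoszulHomology (∀ i, MvPolynomial (Fin n) K ⧸ varIdeal K (A i))
        (X : Fin n → MvPolynomial (Fin n) K) d) =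
      ((∑ i, (A i).card.choose d : ℕ) : ℕ∞) := by
  obtain ⟨ρ, hρ⟩ : ∃ ρ : koszulCycles (∀ i, MvPolynomial (Fin n) K ⧸ varIdeal K (A i))
      (X : Fin n → MvPolynomial (Fin n) K) d →ₗ[MvPolynomial (Fin n) K]
      ((p : (i : ι) × {S // S ∈ (A i).powersetCard d}) → ResidueModule K n),
      ∀ z p, ρ z p = residue K (A p.1) (z.1 p.2.1 p.1) :=
    ⟨LinearMap.pi fun p => residue K (A p.1) ∘ₗ LinearMap.proj p.1 ∘ₗ LinearMap.proj p.2.1 ∘ₗ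
      Submodule.subtype _, fun _ _ => rfl⟩
  have hsurj : Function.Surjective ρ := by
    classical
    intro w
    choose q hq using fun p => Submodule.Quotient.mk_surjective _ (w p)
    refine ⟨⟨_, faceChain_mem_koszulCycles
      (fun i S => if h : S ∈ (A i).powersetCard d then q ⟨i, S, h⟩ else 0) d ?_⟩, ?_⟩
    · intro i S hS
      simp [hS]
    · ext ⟨i, S, hS⟩
      rw [hρ, ← hq]
      simp only [faceChain, (Finset.mem_powersetCard.1 hS).1, if_true, hS, dif_pos]
      rfl
  refine (length_quotient_eq_of_surjective (R := MvPolynomial (Fin n) K)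
    (M := koszulCycles (∀ i, MvPolynomial (Fin n) K ⧸ varIdeal K (A i)) X d)
    (P := (p : (i : ι) × {S // S ∈ (A i).powersetCard d}) → ResidueModule K n) ρ hsurj
    fun z => ?_).trans ?_
  · rw [Submodule.mem_comap]
    constructor
    · intro h
      ext p
      rw [hρ]
      exact residue_eq_zero_of_mem_range h _ _
    · intro h
      obtain ⟨hz1, hz2⟩ := mem_koszulCycles.1 z.2
      refine mem_range_koszulD_pi hz2 fun i S hS => ?_
      by_cases hSd : S.card = d
      · have h' := congrFun h ⟨i, S, Finset.mem_powersetCard.2 ⟨hS, hSd⟩⟩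
        rwa [hρ] at h'
      · rw [Submodule.subtype_apply, hz1 S hSd]
        exact map_zero _
  · rw [Module.length_pi_of_fintype]
    simp only [length_residueModule, Finset.sum_const, Finset.card_univ, Fintype.card_sigma,
      Fintype.card_coe, Finset.card_powersetCard, nsmul_eq_mul, mul_one]

end Family

/-! ### Koszul homology and minimal free resolutions -/

section Resolution

lemma length_koszulHomology_congr {R : Type} [CommRing R] {N N' : Type} [AddCommGroup N]
    [Module R N] [AddCommGroup N'] [Module R N'] (e : N ≃ₗ[R] N') (x : Fin n → R) (d : ℕ) :
    Module.length R (KoszulHomology N x d) = Module.length R (KoszulHomology N' x d) := by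
  refine LinearEquiv.length_eq (LinearEquiv.ofBijective (koszulHomologyMap x d e.toLinearMap)
    ⟨koszulHomologyMap_injective fun z _ h => ?_, koszulHomologyMap_surjective fun z hz => ?_⟩)
  · have h' := comp_mem_range_koszulD h e.symm.toLinearMap
    convert h' using 1
    ext S
    simp
  · refine ⟨e.symm.toLinearMap ∘ z, comp_mem_koszulCycles hz _, ?_⟩
    have : z - e.toLinearMap ∘ e.symm.toLinearMap ∘ z = 0 := by
      ext S
      simp
    rw [this]
    exact zero_mem _

variable (n K) in
/-- A free module as a product of quotients by the zero ideal. -/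
noncomputable def freeEquiv (b : ℕ) :
    (Fin b →₀ MvPolynomial (Fin n) K) ≃ₗ[MvPolynomial (Fin n) K]
      (Fin b → MvPolynomial (Fin n) K ⧸ varIdeal K (∅ : Finset (Fin n))) :=
  (Finsupp.linearEquivFunOnFinite _ _ _).trans (LinearEquiv.piCongrRight fun _ =>
    (Submodule.quotEquivOfEqBot _ (by simp [varIdeal])).symm)

lemma freeEquiv_apply {b : ℕ} (f : Fin b →₀ MvPolynomial (Fin n) K) (i : Fin b) :
    freeEquiv n K b f i = Submodule.Quotient.mk (f i) := rfl

lemma mem_range_koszulD_free {b : ℕ} {z : Finset (Fin n) → Fin b →₀ MvPolynomial (Fin n) K}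
    (hz : koszulD _ (X : Fin n → MvPolynomial (Fin n) K) z = 0)
    (h0 : ∀ i, constantCoeff (z ∅ i) = 0) :
    z ∈ LinearMap.range (koszulD _ (X : Fin n → MvPolynomial (Fin n) K)) := by
  have h : (freeEquiv n K b).toLinearMap ∘ z ∈
      LinearMap.range (koszulD _ (X : Fin n → MvPolynomial (Fin n) K)) := by
    refine mem_range_koszulD_pi (A := fun _ => ∅) ?_ ?_
    · rw [koszulD_comp, hz]
      ext1 S
      simp
    · intro i S hS
      obtain rfl := Finset.subset_empty.1 hS
      rw [Function.comp_apply, LinearEquiv.coe_coe, freeEquiv_apply, residue_mk,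
        Submodule.Quotient.mk_eq_zero, mem_varIdeal_univ]
      exact h0 i
  have h' := comp_mem_range_koszulD h (freeEquiv n K b).symm.toLinearMap
  convert h' using 1
  ext1 S
  simp

lemma length_koszulHomology_free (b d : ℕ) :
    Module.length (MvPolynomial (Fin n) K) (KoszulHomology (Fin b →₀ MvPolynomial (Fin n) K)
      (X : Fin n → MvPolynomial (Fin n) K) d) = ((b * Nat.choose 0 d : ℕ) : ℕ∞) := by
  rw [length_koszulHomology_congr (freeEquiv n K b), length_koszulHomology_pi (fun _ => ∅)]
  simp

section Shift

variable {b : ℕ} {A C : Type} [AddCommGroup A] [Module (MvPolynomial (Fin n) K) A]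
  [AddCommGroup C] [Module (MvPolynomial (Fin n) K) C]
  {f : A →ₗ[MvPolynomial (Fin n) K] (Fin b →₀ MvPolynomial (Fin n) K)}
  {g : (Fin b →₀ MvPolynomial (Fin n) K) →ₗ[MvPolynomial (Fin n) K] C}

lemma length_koszulHomology_succ_of_free (hf : Function.Injective f) (hg : Function.Surjective g)
    (hfg : Function.Exact f g) (hmin : ∀ a i, constantCoeff (f a i) = 0) (d : ℕ) :
    Module.length (MvPolynomial (Fin n) K)
        (KoszulHomology C (X : Fin n → MvPolynomial (Fin n) K) (d + 1)) =
      Module.length (MvPolynomial (Fin n) K)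
        (KoszulHomology A (X : Fin n → MvPolynomial (Fin n) K) d) := by
  rw [length_koszulHomology_succ hf hg hfg X d, length_koszulHomology_free]
  · simp
  · intro z hz
    exact mem_range_koszulD_free (mem_koszulCycles.1 (comp_mem_koszulCycles hz f)).2
      fun i => hmin _ i
  · intro y hy _
    obtain ⟨hy1, hy2⟩ := mem_koszulCycles.1 hy
    refine mem_range_koszulD_free hy2 fun i => ?_
    rw [hy1 ∅ (by simp)]
    simp

lemma length_koszulHomology_zero_of_free (hg : Function.Surjective g)
    (hfg : Function.Exact f g) (hmin : ∀ a i, constantCoeff (f a i) = 0) :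
    Module.length (MvPolynomial (Fin n) K)
        (KoszulHomology C (X : Fin n → MvPolynomial (Fin n) K) 0) = (b : ℕ∞) := by
  have hb := length_koszulHomology_free (n := n) (K := K) b 0
  rw [Nat.choose_zero_right, mul_one] at hb
  rw [← hb, eq_comm]
  refine LinearEquiv.length_eq (LinearEquiv.ofBijective (koszulHomologyMap X 0 g)
    ⟨koszulHomologyMap_injective fun z hz h => ?_, koszulHomologyMap_surjective fun z hz => ?_⟩)
  · obtain ⟨hz1, hz2⟩ := mem_koszulCycles.1 hz
    obtain ⟨a, -, y, rfl⟩ := exists_eq_add_of_comp_mem_range hg hfg hz1 h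
    refine add_mem (LinearMap.mem_range_self _ _) (mem_range_koszulD_free ?_ fun i => hmin _ i)
    rwa [map_add, koszulD_koszulD, zero_add] at hz2
  · obtain ⟨y, hy, rfl⟩ := exists_comp_eq_of_surjective hg (mem_koszulCycles.1 hz).1
    refine ⟨y, mem_koszulCycles.2 ⟨hy, ?_⟩, by simp⟩
    ext1 S
    rw [koszulD_apply]
    refine Finset.sum_eq_zero fun i _ => ?_
    split_ifs with hi
    · rfl
    · rw [hy _ (by simp), smul_zero]

end Shift

namespace MinimalFreeResolution

variable {M : Type} [AddCommGroup M] [Module (MvPolynomial (Fin n) K) M]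
  (F : MinimalFreeResolution n K M)

lemma constantCoeff_φ (d : ℕ) (f : Fin (F.b (d + 1)) →₀ MvPolynomial (Fin n) K)
    (j : Fin (F.b d)) : constantCoeff (F.φ d f j) = 0 := by
  induction f using Finsupp.induction_linear with
  | zero => simp
  | add f g hf hg => simp [hf, hg]
  | single i r =>
    rw [← mul_one r, ← smul_eq_mul, ← Finsupp.smul_single, map_smul, Finsupp.smul_apply,
      smul_eq_mul, map_mul, F.minimal, mul_zero]

lemma length_koszulHomology_range (d k : ℕ) :
    Module.length (MvPolynomial (Fin n) K) (KoszulHomology (LinearMap.range (F.φ k))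
      (X : Fin n → MvPolynomial (Fin n) K) d) = (F.b (d + k + 1) : ℕ∞) := by
  have hg (k : ℕ) : Function.Surjective (F.φ k).rangeRestrict :=
    (F.φ k).surjective_rangeRestrict
  have hf (k : ℕ) : Function.Injective (LinearMap.range (F.φ k)).subtype :=
    (LinearMap.range (F.φ k)).injective_subtype
  have hfg (k : ℕ) : Function.Exact (LinearMap.range (F.φ (k + 1))).subtype
      (F.φ k).rangeRestrict := by
    rw [LinearMap.exact_iff, LinearMap.ker_rangeRestrict, Submodule.range_subtype,
      F.exact_succ]
  have hmin (k : ℕ) (a : LinearMap.range (F.φ (k + 1))) (i : Fin (F.b (k + 1))) :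
      constantCoeff ((LinearMap.range (F.φ (k + 1))).subtype a i) = 0 := by
    obtain ⟨_, p, rfl⟩ := a
    exact F.constantCoeff_φ (k + 1) p i
  induction d generalizing k with
  | zero => 
    rw [length_koszulHomology_zero_of_free (A := LinearMap.range (F.φ (k + 1)))
      (C := LinearMap.range (F.φ k)) (f := (LinearMap.range (F.φ (k + 1))).subtype)
      (g := (F.φ k).rangeRestrict) (hg k) (hfg k) (hmin k), zero_add]
  | succ d ih =>
    rw [length_koszulHomology_succ_of_free (A := LinearMap.range (F.φ (k + 1)))
      (C := LinearMap.range (F.φ k)) (f := (LinearMap.range (F.φ (k + 1))).subtype)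
      (g := (F.φ k).rangeRestrict) (hf (k + 1)) (hg k) (hfg k) (hmin k), ih]
    congr 2
    omega

/-- The ranks in a minimal free resolution are the lengths of the Koszul homology modules. -/
theorem length_koszulHomology (d : ℕ) :
    Module.length (MvPolynomial (Fin n) K) (KoszulHomology M
      (X : Fin n → MvPolynomial (Fin n) K) (d + 1)) = (F.b (d + 1) : ℕ∞) := by
  rw [length_koszulHomology_succ_of_free (A := LinearMap.range (F.φ 0))
    (f := (LinearMap.range (F.φ 0)).subtype) (g := F.ε)
    (LinearMap.range (F.φ 0)).injective_subtype F.surj, F.length_koszulHomology_range]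
  · rw [LinearMap.exact_iff, Submodule.range_subtype, F.exact_zero]
  · rintro ⟨_, p, rfl⟩ i
    exact F.constantCoeff_φ 0 p i

end MinimalFreeResolution

end Resolution

/-! ### The cycle -/

section Cycle

/-- The polynomial made of the monomials of `p` whose exponents satisfy `P`. -/
noncomputable def restrictTerms (P : (Fin n →₀ ℕ) → Prop) [DecidablePred P]
    (p : MvPolynomial (Fin n) K) : MvPolynomial (Fin n) K :=
  ∑ m ∈ p.support.filter P, monomial m (coeff m p)

lemma coeff_restrictTerms (P : (Fin n →₀ ℕ) → Prop) [DecidablePred P]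
    (p : MvPolynomial (Fin n) K) (m : Fin n →₀ ℕ) :
    coeff m (restrictTerms P p) = if P m then coeff m p else 0 := by
  classical
  simp only [restrictTerms, coeff_sum, coeff_monomial]
  rw [Finset.sum_ite_eq' (p.support.filter P) m (fun m => coeff m p)]
  by_cases hP : P m <;> by_cases hm : coeff m p = 0 <;> simp [hP, hm]

lemma mem_varIdeal_vertex {v : Fin n} {p : MvPolynomial (Fin n) K} :
    p ∈ varIdeal K ({v}ᶜ : Finset (Fin n)) ↔
      ∀ m : Fin n →₀ ℕ, (∀ i, m i ≠ 0 → i = v) → coeff m p = 0 := by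
  rw [mem_varIdeal]
  refine forall_congr' fun m => imp_congr_left (forall_congr' fun i => ?_)
  rw [Finset.mem_compl, Finset.mem_singleton]
  tauto

variable [NeZero n]

lemma cycAdj_iff {i j : Fin n} : cycAdj n i j ↔ i + 1 = j ∨ j + 1 = i := by
  simp only [cycAdj, Fin.ext_iff, Fin.val_add, Fin.val_one', Nat.add_mod_mod]

lemma add_one_eq_ite (i : Fin n) : ((i + 1 : Fin n) : ℕ) = if (i : ℕ) + 1 = n then 0 else (i : ℕ) + 1 := by
  rw [Fin.val_add, Fin.val_one', Nat.add_mod_mod]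
  split_ifs with h
  · rw [h, Nat.mod_self]
  · exact Nat.mod_eq_of_lt (by omega)

lemma eq_of_forall_eq_add_one {β : Type} {f : Fin n → β} (h : ∀ v, f v = f (v + 1)) (i j : Fin n) :
    f i = f j := by
  have key (k : ℕ) (hk : k < n) : f ⟨k, hk⟩ = f 0 := by
    induction k with
    | zero => rfl
    | succ k ih =>
      rw [← ih (by omega), h ⟨k, by omega⟩]
      congr 1
      rw [Fin.ext_iff, add_one_eq_ite, if_neg (by dsimp only; omega)]
  exact (key i i.2).trans (key j j.2).symm

lemma exists_sub_add_one_eq (a : Fin n → K) (ha : ∑ i, a i = 0) :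
    ∃ c : Fin n → K, ∀ v, c v - c (v + 1) = a v := by
  let s : ℕ → K := fun k => ∑ i ∈ Finset.range k, if h : i < n then a ⟨i, h⟩ else 0
  have hs (k : ℕ) (hk : k < n) : s (k + 1) = s k + a ⟨k, hk⟩ := by
    simp only [s, Finset.sum_range_succ, hk, dif_pos]
  have hn : s n = 0 := by
    rw [← ha]
    refine (Fin.sum_univ_eq_sum_range (fun i => if h : i < n then a ⟨i, h⟩ else 0) n).symm.trans ?_
    simp
  refine ⟨fun v => -s v, fun v => ?_⟩
  simp only [add_one_eq_ite]
  have h1 := hs v v.2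
  split_ifs with h
  · rw [h, hn] at h1
    have : s 0 = 0 := rfl
    rw [this]
    linear_combination h1
  · linear_combination h1

/-- The support of `m` is contained in the edge `{e, e + 1}`. -/
def OnEdge (e : Fin n) (m : Fin n →₀ ℕ) : Prop := ∀ i, m i ≠ 0 → i = e ∨ i = e + 1

lemma mem_varIdeal_edge {e : Fin n} {p : MvPolynomial (Fin n) K} :
    p ∈ varIdeal K ({e, e + 1}ᶜ : Finset (Fin n)) ↔ ∀ m, OnEdge e m → coeff m p = 0 := by
  rw [mem_varIdeal]
  refine forall_congr' fun m => imp_congr_left (forall_congr' fun i => ?_)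
  rw [Finset.mem_compl, Finset.mem_insert, Finset.mem_singleton]
  tauto

lemma exists_onEdge (hn : 5 ≤ n) (m : Fin n →₀ ℕ)
    (hm : ∀ i j, m i ≠ 0 → m j ≠ 0 → i ≠ j → cycAdj n i j) : ∃ e, OnEdge e m := by
  have h3 (a b c : Fin n) (h₁ : a + 1 = b) (h₂ : b + 1 = c) (h₃ : c + 1 = a) : False := by
    rw [Fin.ext_iff, add_one_eq_ite] at h₁ h₂ h₃
    split_ifs at h₁ h₂ h₃ <;> omega
  have key (a b : Fin n) (ha : m a ≠ 0) (hb : m b ≠ 0) (hab : a + 1 = b) : OnEdge a m := by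
    intro c hc
    by_contra! h
    have hca := cycAdj_iff.1 (hm c a hc ha h.1)
    have hcb := cycAdj_iff.1 (hm c b hc hb (hab ▸ h.2))
    rcases hca with hca | hca
    · rcases hcb with hcb | hcb
      · exact h.1 (add_right_cancel (hcb.trans hab.symm))
      · exact h3 a b c hab hcb hca
    · exact h.2 hca.symm
  by_cases h0 : ∃ a, m a ≠ 0
  · obtain ⟨a, ha⟩ := h0
    by_cases h1 : ∃ b, m b ≠ 0 ∧ a ≠ b
    · obtain ⟨b, hb, hab⟩ := h1
      rcases cycAdj_iff.1 (hm a b ha hb hab) with h | h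
      · exact ⟨a, key a b ha hb h⟩
      · exact ⟨b, key b a hb ha h⟩
    · push Not at h1
      exact ⟨a, fun i hi => Or.inl (h1 i hi).symm⟩
  · push Not at h0
    exact ⟨0, fun i hi => absurd (h0 i) hi⟩

lemma mem_cycleIdeal (hn : 5 ≤ n) {p : MvPolynomial (Fin n) K} :
    p ∈ cycleIdeal n K ↔ ∀ e, p ∈ varIdeal K ({e, e + 1}ᶜ : Finset (Fin n)) := by
  constructor
  · intro hp e
    refine Ideal.span_le.2 ?_ hp
    rintro _ ⟨i, j, hij, hadj, rfl⟩
    by_cases hi : i ∈ ({e, e + 1}ᶜ : Finset (Fin n))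
    · exact Ideal.mul_mem_right _ _ (X_mem_varIdeal hi)
    by_cases hj : j ∈ ({e, e + 1}ᶜ : Finset (Fin n))
    · exact Ideal.mul_mem_left _ _ (X_mem_varIdeal hj)
    exfalso
    apply hadj
    rw [cycAdj_iff]
    simp only [Finset.mem_compl, Finset.mem_insert, Finset.mem_singleton, not_not] at hi hj
    rcases hi with rfl | rfl <;> rcases hj with rfl | rfl <;> simp_all
  · intro h
    rw [← support_sum_monomial_coeff p]
    refine Ideal.sum_mem _ fun m hm => ?_
    obtain ⟨i, j, hi, hj, hij, hadj⟩ :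
        ∃ i j, m i ≠ 0 ∧ m j ≠ 0 ∧ i ≠ j ∧ ¬ cycAdj n i j := by
      by_contra! hc
      obtain ⟨e, he⟩ := exists_onEdge hn m hc
      exact mem_support_iff.1 hm (mem_varIdeal_edge.1 (h e) m he)
    have hle : Finsupp.single i 1 + Finsupp.single j 1 ≤ m := by
      intro k
      simp only [Finsupp.add_apply, Finsupp.single_apply]
      split_ifs with h₁ h₂ h₂
      · exact absurd (h₁.trans h₂.symm) hij
      · subst h₁; omega
      · subst h₂; omega
      · omega
    have hmono : monomial m (coeff m p) = monomial (m - (Finsupp.single i 1 + Finsupp.single j 1))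
        (coeff m p) * (X i * X j) := by
      rw [X, X, monomial_mul, monomial_mul, one_mul, mul_one, tsub_add_cancel_of_le hle]
    rw [hmono]
    exact Ideal.mul_mem_left _ _ (Ideal.subset_span ⟨i, j, hij, hadj, rfl⟩)

variable (n K)

/-- The product of the coordinate rings of the edges. -/
abbrev EdgeModule : Type :=
  ∀ e : Fin n, MvPolynomial (Fin n) K ⧸ varIdeal K ({e, e + 1}ᶜ : Finset (Fin n))

/-- The product of the coordinate rings of the vertices. -/
abbrev VertexModule : Type :=
  ∀ e : Fin n, MvPolynomial (Fin n) K ⧸ varIdeal K ({e + 1}ᶜ : Finset (Fin n))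

/-- The coordinate ring of the origin. -/
abbrev OriginModule : Type :=
  ∀ _ : Unit, MvPolynomial (Fin n) K ⧸ varIdeal K (Finset.univ : Finset (Fin n))

/-- Restriction of functions to the edges. -/
noncomputable def toEdges (hn : 5 ≤ n) :
    (MvPolynomial (Fin n) K ⧸ cycleIdeal n K) →ₗ[MvPolynomial (Fin n) K] EdgeModule n K :=
  LinearMap.pi fun e => Submodule.factor fun _ hp => (mem_cycleIdeal hn).1 hp e

/-- The differences of the restrictions of functions on the two edges at a vertex. -/
noncomputable def edgesToVertices : EdgeModule n K →ₗ[MvPolynomial (Fin n) K] VertexModule n K :=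
  LinearMap.pi fun e =>
    Submodule.factor (varIdeal_mono (by simp)) ∘ₗ LinearMap.proj e -
      Submodule.factor (varIdeal_mono (by simp)) ∘ₗ LinearMap.proj (e + 1)

/-- The sum of the values at the origin. -/
noncomputable def verticesToOrigin :
    VertexModule n K →ₗ[MvPolynomial (Fin n) K] OriginModule n K :=
  LinearMap.pi fun _ => ∑ e, residue K _ ∘ₗ LinearMap.proj e

variable {n K}

lemma toEdges_mk (hn : 5 ≤ n) (p : MvPolynomial (Fin n) K) (e : Fin n) :
    toEdges n K hn (Submodule.Quotient.mk p) e = Submodule.Quotient.mk p := rfl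

lemma edgesToVertices_mk (p : Fin n → MvPolynomial (Fin n) K) (e : Fin n) :
    edgesToVertices n K (fun e => Submodule.Quotient.mk (p e)) e =
      Submodule.Quotient.mk (p e - p (e + 1)) := rfl

lemma residue_edgesToVertices (w : EdgeModule n K) (e : Fin n) :
    residue K _ (edgesToVertices n K w e) = residue K _ (w e) - residue K _ (w (e + 1)) := by
  choose p hp using fun e => Submodule.Quotient.mk_surjective _ (w e)
  obtain rfl : (fun e => Submodule.Quotient.mk (p e)) = w := funext hp
  rfl

lemma verticesToOrigin_apply (w : VertexModule n K) (u : Unit) :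
    verticesToOrigin n K w u = ∑ e, residue K _ (w e) := by
  simp [verticesToOrigin]

lemma verticesToOrigin_mk (q : Fin n → MvPolynomial (Fin n) K) :
    verticesToOrigin n K (fun e => Submodule.Quotient.mk (q e)) = 0 ↔
      ∑ e, constantCoeff (q e) = 0 := by
  rw [← map_sum, ← mem_varIdeal_univ, ← Submodule.Quotient.mk_eq_zero, ← Submodule.mkQ_apply,
    map_sum, funext_iff]
  simp only [verticesToOrigin_apply, residue_mk, Submodule.mkQ_apply, Pi.zero_apply]
  exact ⟨fun h => h (), fun h _ => h⟩

lemma toEdges_injective (hn : 5 ≤ n) : Function.Injective (toEdges n K hn) := by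
  rw [injective_iff_map_eq_zero]
  intro a ha
  obtain ⟨p, rfl⟩ := Submodule.Quotient.mk_surjective _ a
  rw [Submodule.Quotient.mk_eq_zero, mem_cycleIdeal hn]
  intro e
  have := congrFun ha e
  rwa [toEdges_mk, Pi.zero_apply, Submodule.Quotient.mk_eq_zero] at this

lemma coeff_eq_of_onEdge (hn : 5 ≤ n) {p : Fin n → MvPolynomial (Fin n) K}
    (hp : ∀ e, p e - p (e + 1) ∈ varIdeal K ({e + 1}ᶜ : Finset (Fin n))) {e e' : Fin n}
    {m : Fin n →₀ ℕ} (he : OnEdge e m) (he' : OnEdge e' m) :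
    coeff m (p e) = coeff m (p e') := by
  have hv (v : Fin n) (hm : ∀ i, m i ≠ 0 → i = v + 1) : coeff m (p v) = coeff m (p (v + 1)) := by
    have := mem_varIdeal_vertex.1 (hp v) m hm
    rwa [coeff_sub, sub_eq_zero] at this
  have h2 (a b : Fin n) (h₁ : a + 1 = b) (h₂ : b + 1 = a) : False := by
    rw [Fin.ext_iff, add_one_eq_ite] at h₁ h₂
    split_ifs at h₁ h₂ <;> omega
  have hstep (a : Fin n) (ha : OnEdge a m) (ha' : OnEdge (a + 1) m) :
      coeff m (p a) = coeff m (p (a + 1)) := by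
    refine hv a fun i hi => ?_
    rcases ha i hi with rfl | h
    · rcases ha' i hi with h | h
      · exact h
      · exact (h2 _ _ rfl h.symm).elim
    · exact h
  by_cases h0 : ∃ a, m a ≠ 0
  · obtain ⟨a, ha⟩ := h0
    rcases he a ha with rfl | h
    · rcases he' a ha with rfl | rfl
      · rfl
      · exact (hstep e' he' he).symm
    · rcases he' a ha with rfl | h'
      · subst h
        exact hstep e he he'
      · rw [add_right_cancel (h.symm.trans h')]
  · push Not at h0
    exact eq_of_forall_eq_add_one (f := fun e => coeff m (p e))
      (fun v => hv v fun i hi => absurd (h0 i) hi) e e'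

lemma toEdges_exact (hn : 5 ≤ n) : Function.Exact (toEdges n K hn) (edgesToVertices n K) := by
  intro w
  choose p hp using fun e => Submodule.Quotient.mk_surjective _ (w e)
  obtain rfl : (fun e => Submodule.Quotient.mk (p e)) = w := funext hp
  constructor
  · intro h
    have hp' (e : Fin n) : p e - p (e + 1) ∈ varIdeal K ({e + 1}ᶜ : Finset (Fin n)) := by
      have := congrFun h e
      rwa [edgesToVertices_mk, Pi.zero_apply, Submodule.Quotient.mk_eq_zero] at this
    classical
    obtain ⟨ε, hε⟩ : ∃ ε : (Fin n →₀ ℕ) → Fin n, ∀ m e, OnEdge e m → OnEdge (ε m) m := by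
      have (m : Fin n →₀ ℕ) : ∃ e', ∀ e, OnEdge e m → OnEdge e' m := by
        by_cases h : ∃ e, OnEdge e m
        · exact ⟨h.choose, fun _ _ => h.choose_spec⟩
        · exact ⟨0, fun e he => absurd ⟨e, he⟩ h⟩
      choose ε hε using this
      exact ⟨ε, hε⟩
    refine ⟨Submodule.Quotient.mk (∑ e, restrictTerms (fun m => ε m = e) (p e)), ?_⟩
    ext1 e
    rw [toEdges_mk, Submodule.Quotient.eq, mem_varIdeal_edge]
    intro m hm
    rw [coeff_sub, coeff_sum]
    simp only [coeff_restrictTerms, Finset.sum_ite_eq, Finset.mem_univ, if_true]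
    rw [sub_eq_zero]
    exact coeff_eq_of_onEdge hn hp' (hε m e hm) hm
  · rintro ⟨a, ha⟩
    obtain ⟨q, rfl⟩ := Submodule.Quotient.mk_surjective _ a
    rw [← ha]
    ext1 e
    have : toEdges n K hn (Submodule.Quotient.mk q) = fun e => Submodule.Quotient.mk q := rfl
    rw [this, edgesToVertices_mk (fun _ => q), sub_self]
    rfl

lemma edgesToVertices_exact (hn : 5 ≤ n) :
    Function.Exact (edgesToVertices n K) (verticesToOrigin n K) := by
  intro w
  constructor
  · intro h
    choose q hq using fun e => Submodule.Quotient.mk_surjective _ (w e)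
    obtain rfl : (fun e => Submodule.Quotient.mk (q e)) = w := funext hq
    obtain ⟨c, hc⟩ := exists_sub_add_one_eq _ ((verticesToOrigin_mk q).1 h)
    classical
    obtain ⟨p, hp⟩ : ∃ p : Fin n → MvPolynomial (Fin n) K, ∀ e, p (e + 1) =
        C (c (e + 1)) - restrictTerms (fun m => m (e + 1) ≠ 0) (q e) :=
      ⟨fun e => C (c e) - restrictTerms (fun m => m e ≠ 0) (q (e - 1)), fun e => by
        simp⟩
    refine ⟨fun e => Submodule.Quotient.mk (p e), ?_⟩
    ext1 e
    rw [edgesToVertices_mk, Submodule.Quotient.eq, mem_varIdeal_vertex]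
    intro m hm
    obtain ⟨e, rfl⟩ : ∃ e', e = e' + 1 := ⟨e - 1, by simp⟩
    rw [hp, hp]
    simp only [coeff_sub, coeff_restrictTerms, coeff_C]
    have hm' : m (e + 1) = 0 := by
      by_contra h
      have := hm _ h
      rw [Fin.ext_iff, add_one_eq_ite (e + 1)] at this
      split_ifs at this <;> omega
    by_cases h0 : m (e + 1 + 1) = 0
    · have hm0 : m = 0 := by
        ext i
        by_contra hi
        exact hi (hm i hi ▸ h0)
      subst hm0
      have := hc (e + 1)
      rw [constantCoeff_eq] at this
      simp only [Finsupp.coe_zero, Pi.zero_apply, ne_eq, not_true_eq_false, if_true, if_false]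
      linear_combination this
    · have hm0 : (0 : Fin n →₀ ℕ) ≠ m := by
        rintro rfl
        exact h0 rfl
      simp [hm', h0, hm0]
  · rintro ⟨a, rfl⟩
    ext1 u
    rw [verticesToOrigin_apply]
    simp only [residue_edgesToVertices, Finset.sum_sub_distrib]
    refine sub_eq_zero.2 ?_
    exact (Equiv.sum_comp (Equiv.addRight (1 : Fin n)) (fun e => residue K _ (a e))).symm

lemma verticesToOrigin_surjective : Function.Surjective (verticesToOrigin n K) := by
  intro w
  obtain ⟨p, hp⟩ := Submodule.Quotient.mk_surjective _ (w ())
  refine ⟨fun e => Submodule.Quotient.mk (if e = 0 then p else 0), ?_⟩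
  ext1 u
  rw [verticesToOrigin_apply, Finset.sum_eq_single 0]
  · rw [if_pos rfl, residue_mk, hp]
  · intro e _ he
    rw [if_neg he, residue_mk, Submodule.Quotient.mk_zero]
  · simp

lemma mem_range_of_edgesToVertices {d : ℕ} {z : Finset (Fin n) → EdgeModule n K}
    (hz : z ∈ koszulCycles _ (X : Fin n → MvPolynomial (Fin n) K) (d + 1))
    (h : edgesToVertices n K ∘ z ∈
      LinearMap.range (koszulD _ (X : Fin n → MvPolynomial (Fin n) K))) :
    z ∈ LinearMap.range (koszulD _ (X : Fin n → MvPolynomial (Fin n) K)) := by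
  obtain ⟨hz1, hz2⟩ := mem_koszulCycles.1 hz
  refine mem_range_koszulD_pi (A := fun e => {e, e + 1}ᶜ) hz2 fun e S _ => ?_
  rcases S.eq_empty_or_nonempty with rfl | ⟨i, hi⟩
  · rw [hz1 ∅ (by simp)]
    exact map_zero _
  have hconst := eq_of_forall_eq_add_one (f := fun e => residue K _ (z S e)) (fun e => by
    have := residue_eq_zero_of_mem_range (A := fun e => {e + 1}ᶜ) h e S
    rw [Function.comp_apply, residue_edgesToVertices, sub_eq_zero] at this
    exact this) e i
  refine hconst.trans (residue_eq_zero_of_cycle (i := i) (z := fun S => z S i) (by simp) ?_ hi)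
  have := koszulD_comp (X : Fin n → MvPolynomial (Fin n) K)
    (LinearMap.proj (φ := fun e => MvPolynomial (Fin n) K ⧸ varIdeal K {e, e + 1}ᶜ) i) z
  rw [hz2] at this
  exact this

lemma exists_verticesToOrigin_comp {d : ℕ} (hd : d < n) {z : Finset (Fin n) → OriginModule n K}
    (hz : z ∈ koszulCycles _ (X : Fin n → MvPolynomial (Fin n) K) d) :
    ∃ y ∈ koszulCycles _ (X : Fin n → MvPolynomial (Fin n) K) d,
      z - verticesToOrigin n K ∘ y ∈
        LinearMap.range (koszulD _ (X : Fin n → MvPolynomial (Fin n) K)) := by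
  obtain ⟨hz1, -⟩ := mem_koszulCycles.1 hz
  choose p hp using fun S => Submodule.Quotient.mk_surjective _ (z S ())
  have hv (S : Finset (Fin n)) : ∃ v : Fin n, S.card = d → v + 1 ∉ S := by
    by_cases hS : S.card = d
    · obtain ⟨v, hv⟩ : ∃ v, v ∉ S := by
        by_contra! h
        rw [Finset.eq_univ_of_forall h, Finset.card_univ, Fintype.card_fin] at hS
        omega
      exact ⟨v - 1, fun _ => by simpa using hv⟩
    · exact ⟨0, fun h => absurd h hS⟩
  choose v hv using hv
  suffices h : ∃ y ∈ koszulCycles _ (X : Fin n → MvPolynomial (Fin n) K) d,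
      z = verticesToOrigin n K ∘ y by
    obtain ⟨y, hy, hzy⟩ := h
    refine ⟨y, hy, ?_⟩
    rw [hzy, sub_self]
    exact zero_mem _
  refine ⟨faceChain (fun e => {e + 1}ᶜ) fun e S => if S.card = d ∧ e = v S then p S else 0,
    faceChain_mem_koszulCycles _ d fun e S hS => by simp [hS], ?_⟩
  ext1 S
  ext1 u
  rw [Function.comp_apply, verticesToOrigin_apply]
  by_cases hS : S.card = d
  · rw [Finset.sum_eq_single (v S)]
    · rw [faceChain, if_pos (by simpa using hv S hS), if_pos ⟨hS, rfl⟩, residue_mk, hp]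
    · intro e _ he
      rw [faceChain]
      split_ifs with _ h
      exacts [absurd h.2 he, map_zero _, map_zero _]
    · simp
  · rw [hz1 S hS, Finset.sum_eq_zero]
    · rfl
    · intro e _
      rw [faceChain]
      split_ifs with _ h
      exacts [absurd h.1 hS, map_zero _, map_zero _]

/-- The Koszul homology of the coordinate ring of the cycle. -/
theorem length_koszulHomology_cycle (hn : 5 ≤ n) {d : ℕ} (hd : d + 4 ≤ n) :
    ((n * (n - 1).choose (d + 2) : ℕ) : ℕ∞) = ((n * (n - 2).choose (d + 2) : ℕ) : ℕ∞) +
      Module.length (MvPolynomial (Fin n) K) (KoszulHomology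
        (MvPolynomial (Fin n) K ⧸ cycleIdeal n K) (X : Fin n → MvPolynomial (Fin n) K) (d + 1)) +
      ((n.choose (d + 2) : ℕ) : ℕ∞) := by
  have hE := length_koszulHomology_pi (K := K) (fun e : Fin n => {e, e + 1}ᶜ) (d + 2)
  have hV := length_koszulHomology_pi (K := K) (fun e : Fin n => {e + 1}ᶜ) (d + 2)
  have hO := length_koszulHomology_pi (n := n) (K := K) (fun _ : Unit => Finset.univ) (d + 2)
  have hne (e : Fin n) : e ≠ e + 1 := by
    rw [ne_eq, Fin.ext_iff, add_one_eq_ite]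
    split_ifs <;> omega
  simp only [Finset.card_compl, Finset.card_pair (hne _), Finset.card_singleton, Finset.card_univ,
    Fintype.card_fin, Finset.sum_const, smul_eq_mul, Fintype.card_unit, one_mul] at hE hV hO
  let N := LinearMap.ker (verticesToOrigin n K)
  have hVO := edgesToVertices_exact (n := n) (K := K) hn
  let g : EdgeModule n K →ₗ[MvPolynomial (Fin n) K] N :=
    (edgesToVertices n K).codRestrict N fun w => hVO.apply_apply_eq_zero w
  have hgN (z : Finset (Fin n) → EdgeModule n K) : N.subtype ∘ g ∘ z = edgesToVertices n K ∘ z := rfl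
  have h1 := length_koszulHomology_of_surjective (A := N) (f := N.subtype) (g := verticesToOrigin n K)
    N.injective_subtype (by rw [LinearMap.exact_iff, Submodule.range_subtype])
    verticesToOrigin_surjective X (d + 2)
    (fun z hz => exists_verticesToOrigin_comp (by omega) hz)
    (fun z hz => exists_verticesToOrigin_comp (by omega) hz)
  have hinj (k : ℕ) (y : Finset (Fin n) → EdgeModule n K) (hy : y ∈ koszulCycles _
      (X : Fin n → MvPolynomial (Fin n) K) (k + 1))
      (h : g ∘ y ∈ LinearMap.range (koszulD _ (X : Fin n → MvPolynomial (Fin n) K))) :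
      y ∈ LinearMap.range (koszulD _ (X : Fin n → MvPolynomial (Fin n) K)) :=
    mem_range_of_edgesToVertices hy (hgN y ▸ comp_mem_range_koszulD h N.subtype)
  have hex : Function.Exact (toEdges n K hn) g := by
    intro w
    rw [← toEdges_exact hn w, ← Submodule.coe_eq_zero]
    rfl
  have h2 := length_koszulHomology_succ (C := N) (f := toEdges n K hn) (g := g) (toEdges_injective hn)
    (by
      rintro ⟨w, hw⟩
      obtain ⟨y, rfl⟩ := (hVO w).1 hw
      exact ⟨y, rfl⟩)
    hex X (d + 1)
    (fun z hz => hinj d _ (comp_mem_koszulCycles hz _) (by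
      have : g ∘ toEdges n K hn ∘ z = 0 := funext fun S => hex.apply_apply_eq_zero _
      rw [this]
      exact zero_mem _))
    (fun y hy h => hinj (d + 1) y hy h)
  rw [← hE, ← hV, ← hO, ← h2]
  exact h1

end Cycle

end Variables

/-! ### Standard Young tableaux of shape `(d + 1, 2, 1, …, 1)` -/

section Tableaux

/-- The increasing enumeration of a finite set of natural numbers, extended by zero. -/
noncomputable def enumerate (A : Finset ℕ) (k : ℕ) : ℕ :=
  if h : k < A.card then A.orderEmbOfFin rfl ⟨k, h⟩ else 0

lemma enumerate_of_le {A : Finset ℕ} {k : ℕ} (h : A.card ≤ k) : enumerate A k = 0 :=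
  dif_neg h.not_gt

lemma enumerate_mem {A : Finset ℕ} {k : ℕ} (h : k < A.card) : enumerate A k ∈ A := by
  rw [enumerate, dif_pos h]
  exact A.orderEmbOfFin_mem rfl _

lemma enumerate_lt {A : Finset ℕ} {j k : ℕ} (hjk : j < k) (h : k < A.card) :
    enumerate A j < enumerate A k := by
  rw [enumerate, enumerate, dif_pos h, dif_pos (hjk.trans h)]
  exact (A.orderEmbOfFin rfl).strictMono hjk

lemma enumerate_inj {A : Finset ℕ} {j k : ℕ} (hj : j < A.card) (hk : k < A.card)
    (h : enumerate A j = enumerate A k) : j = k := by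
  rcases lt_trichotomy j k with h' | h' | h'
  · exact absurd h (enumerate_lt h' hk).ne
  · exact h'
  · exact absurd h (enumerate_lt h' hj).ne'

lemma exists_enumerate_eq {A : Finset ℕ} {a : ℕ} (ha : a ∈ A) :
    ∃ k < A.card, enumerate A k = a := by
  have : a ∈ Set.range (A.orderEmbOfFin rfl) := by rwa [A.range_orderEmbOfFin rfl]
  obtain ⟨k, rfl⟩ := this
  exact ⟨k, k.2, dif_pos k.2⟩

lemma enumerate_zero_le {A : Finset ℕ} {a : ℕ} (ha : a ∈ A) : enumerate A 0 ≤ a := by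
  obtain ⟨k, hk, rfl⟩ := exists_enumerate_eq ha
  rcases Nat.eq_zero_or_pos k with rfl | h
  · rfl
  · exact (enumerate_lt h hk).le

lemma eq_enumerate {A : Finset ℕ} {f : ℕ → ℕ} (hf : ∀ k, k < A.card → f k ∈ A)
    (hmono : ∀ k, k + 1 < A.card → f k < f (k + 1)) {k : ℕ} (hk : k < A.card) :
    f k = enumerate A k := by
  have hlt (i j : ℕ) (hij : i < j) (hj : j < A.card) : f i < f j := by
    induction j, hij using Nat.le_induction with
    | base => exact hmono i hj
    | succ j hij ih => exact (ih (by omega)).trans (hmono j hj)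
  have := A.orderEmbOfFin_unique (f := fun i : Fin A.card => f i) rfl (fun i => hf i i.2)
    (fun i j hij => hlt i j hij j.2)
  rw [enumerate, dif_pos hk, ← this]

variable {n d : ℕ}

lemma isCell_iff (hd : d + 3 ≤ n) {c : ℕ × ℕ} :
    IsCell ((d + 1) :: 2 :: List.replicate (n - d - 3) 1) c ↔
      c = (0, 0) ∨ (∃ k < d, c = (0, k + 1)) ∨ (∃ k < n - d - 2, c = (k + 1, 0)) ∨ c = (1, 1) := by
  obtain ⟨i, j⟩ := c
  rcases i with _ | _ | i <;> rcases j with _ | _ | j <;>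
    simp [IsCell, List.getD_eq_getElem?_getD, List.getElem?_replicate] <;> grind

/-- The pairs formed by the entry in the box `(1, 1)` and the set of the remaining entries of the
first row. -/
def arms (n d : ℕ) : Finset ((_ : ℕ) × Finset ℕ) :=
  (Finset.Icc 2 n).sigma fun x => ((Finset.Icc 2 n).erase x).powersetCard d

/-- The entries of the first column below the corner. -/
def leg (n : ℕ) (p : (_ : ℕ) × Finset ℕ) : Finset ℕ := (Finset.Icc 2 n).erase p.1 \ p.2

lemma mem_arms {p : (_ : ℕ) × Finset ℕ} : p ∈ arms n d ↔
    p.1 ∈ Finset.Icc 2 n ∧ p.2 ⊆ (Finset.Icc 2 n).erase p.1 ∧ p.2.card = d := by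
  simp [arms, Finset.mem_powersetCard]

lemma card_leg {p : (_ : ℕ) × Finset ℕ} (hp : p ∈ arms n d) : (leg n p).card = n - d - 2 := by
  obtain ⟨h1, h2, h3⟩ := mem_arms.1 hp
  rw [leg, Finset.card_sdiff_of_subset h2, Finset.card_erase_of_mem h1, Nat.card_Icc, h3]
  omega

/-- The pairs coming from standard tableaux. -/
def goodArms (n d : ℕ) : Finset ((_ : ℕ) × Finset ℕ) :=
  (arms n d).filter fun p => (∃ a ∈ p.2, a < p.1) ∧ ∃ b ∈ leg n p, b < p.1

/-- The tableau determined by a pair. -/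
noncomputable def armTableau (n : ℕ) (p : (_ : ℕ) × Finset ℕ) : ℕ × ℕ → ℕ
  | (0, 0) => 1
  | (0, k + 1) => enumerate p.2 k
  | (1, 1) => p.1
  | (k + 1, 0) => enumerate (leg n p) k
  | _ => 0

lemma armTableau_corner (p : (_ : ℕ) × Finset ℕ) : armTableau n p (0, 0) = 1 := rfl

lemma armTableau_row (p : (_ : ℕ) × Finset ℕ) (k : ℕ) :
    armTableau n p (0, k + 1) = enumerate p.2 k := rfl

lemma armTableau_inner (p : (_ : ℕ) × Finset ℕ) : armTableau n p (1, 1) = p.1 := rfl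

lemma armTableau_col (p : (_ : ℕ) × Finset ℕ) (k : ℕ) :
    armTableau n p (k + 1, 0) = enumerate (leg n p) k := by
  rcases k with _ | k <;> rfl

lemma armTableau_of_not_isCell (hd : d + 3 ≤ n) {p : (_ : ℕ) × Finset ℕ} (hp : p ∈ arms n d)
    {c : ℕ × ℕ} (hc : ¬ IsCell ((d + 1) :: 2 :: List.replicate (n - d - 3) 1) c) :
    armTableau n p c = 0 := by
  have hA := (mem_arms.1 hp).2.2
  have hB := card_leg hp
  rw [isCell_iff hd] at hc
  push Not at hc
  obtain ⟨h1, h2, h3, h4⟩ := hc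
  obtain ⟨i, j⟩ := c
  rcases i with _ | i
  · rcases j with _ | j
    · exact absurd rfl h1
    · rw [armTableau_row]
      exact enumerate_of_le (by by_contra! h; exact h2 j (by omega) rfl)
  · rcases j with _ | j
    · rw [armTableau_col]
      exact enumerate_of_le (by by_contra! h; exact h3 i (by omega) rfl)
    · rcases i with _ | i
      · rcases j with _ | j
        · exact absurd rfl h4
        · rfl
      · rcases j with _ | j <;> rfl

lemma isSYT_armTableau (hd : d + 3 ≤ n) (hd1 : 1 ≤ d) {p : (_ : ℕ) × Finset ℕ}
    (hp : p ∈ goodArms n d) :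
    IsSYT ((d + 1) :: 2 :: List.replicate (n - d - 3) 1) (armTableau n p) := by
  obtain ⟨hp, ⟨a, ha, hax⟩, ⟨b, hb, hbx⟩⟩ := Finset.mem_filter.1 hp
  obtain ⟨hx, hAs, hA⟩ := mem_arms.1 hp
  have hB := card_leg hp
  have hx' := Finset.mem_Icc.1 hx
  have hAmem (k : ℕ) (hk : k < d) := enumerate_mem (A := p.2) (k := k) (by omega)
  have hBmem (k : ℕ) (hk : k < n - d - 2) := enumerate_mem (A := leg n p) (k := k) (by omega)
  have hAIcc (y : ℕ) (hy : y ∈ p.2) : y ≠ p.1 ∧ 2 ≤ y ∧ y ≤ n := by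
    have := hAs hy
    simpa using this
  have hBIcc (y : ℕ) (hy : y ∈ leg n p) : (y ≠ p.1 ∧ 2 ≤ y ∧ y ≤ n) ∧ y ∉ p.2 := by
    simpa [leg] using hy
  have hsum : ((d + 1) :: 2 :: List.replicate (n - d - 3) 1).sum = n := by
    simp
    omega
  refine ⟨fun c hc => armTableau_of_not_isCell hd hp hc, ?_, ?_, ?_, ?_⟩
  · intro c hc
    rw [hsum]
    rcases (isCell_iff hd).1 hc with rfl | ⟨k, hk, rfl⟩ | ⟨k, hk, rfl⟩ | rfl
    · rw [armTableau_corner]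
      omega
    · rw [armTableau_row]
      have := hAIcc _ (hAmem k hk)
      omega
    · rw [armTableau_col]
      have := hBIcc _ (hBmem k hk)
      omega
    · rw [armTableau_inner]
      omega
  · intro c c' hc hc' h
    rcases (isCell_iff hd).1 hc with rfl | ⟨k, hk, rfl⟩ | ⟨k, hk, rfl⟩ | rfl <;>
    rcases (isCell_iff hd).1 hc' with rfl | ⟨k', hk', rfl⟩ | ⟨k', hk', rfl⟩ | rfl <;>
    simp only [armTableau_corner, armTableau_row, armTableau_col, armTableau_inner] at h
    · rfl
    · have := hAIcc _ (hAmem k' hk')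
      omega
    · have := hBIcc _ (hBmem k' hk')
      omega
    · omega
    · have := hAIcc _ (hAmem k hk)
      omega
    · rw [enumerate_inj (by omega) (by omega) h]
    · exact absurd (h ▸ hAmem k hk) (hBIcc _ (hBmem k' hk')).2
    · exact absurd h (hAIcc _ (hAmem k hk)).1
    · have := hBIcc _ (hBmem k hk)
      omega
    · exact absurd (h.symm ▸ hAmem k' hk') (hBIcc _ (hBmem k hk)).2
    · rw [enumerate_inj (by omega) (by omega) h]
    · exact absurd h (hBIcc _ (hBmem k hk)).1.1
    · omega
    · exact absurd h.symm (hAIcc _ (hAmem k' hk')).1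
    · exact absurd h.symm (hBIcc _ (hBmem k' hk')).1.1
    · rfl
  · intro i j hij
    rcases (isCell_iff hd).1 hij with h | ⟨k, hk, h⟩ | ⟨k, hk, h⟩ | h <;>
      simp only [Prod.mk.injEq, Nat.add_eq_zero_iff, Nat.add_right_cancel_iff] at h
    · omega
    · obtain ⟨rfl, rfl⟩ := h
      rcases j with _ | j
      · rw [armTableau_corner, armTableau_row]
        have := hAIcc _ (hAmem 0 hk)
        omega
      · exact enumerate_lt (Nat.lt_succ_self j) (by omega)
    · omega
    · obtain ⟨rfl, h⟩ := h
      obtain rfl : j = 0 := by omega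
      rw [armTableau_inner, armTableau_col]
      exact (enumerate_zero_le hb).trans_lt hbx
  · intro i j hij
    rcases (isCell_iff hd).1 hij with h | ⟨k, hk, h⟩ | ⟨k, hk, h⟩ | h <;>
      simp only [Prod.mk.injEq, Nat.add_eq_zero_iff, Nat.add_right_cancel_iff] at h
    · omega
    · omega
    · obtain ⟨rfl, rfl⟩ := h
      rcases i with _ | i
      · rw [armTableau_corner, armTableau_col]
        have := hBIcc _ (hBmem 0 hk)
        omega
      · rw [armTableau_col, armTableau_col]
        exact enumerate_lt (Nat.lt_succ_self i) (by omega)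
    · obtain ⟨h, rfl⟩ := h
      obtain rfl : i = 0 := by omega
      rw [armTableau_inner, armTableau_row]
      exact (enumerate_zero_le ha).trans_lt hax

/-- The pair attached to a tableau. -/
def toArm (d : ℕ) (T : ℕ × ℕ → ℕ) : (_ : ℕ) × Finset ℕ :=
  ⟨T (1, 1), (Finset.range d).image fun k => T (0, k + 1)⟩

lemma toArm_armTableau {p : (_ : ℕ) × Finset ℕ} (hp : p ∈ arms n d) :
    toArm d (armTableau n p) = p := by
  obtain ⟨-, -, hA⟩ := mem_arms.1 hp
  refine Sigma.ext rfl (heq_of_eq ?_)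
  ext a
  simp only [toArm, Finset.mem_image, Finset.mem_range, armTableau_row]
  constructor
  · rintro ⟨k, hk, rfl⟩
    exact enumerate_mem (by omega)
  · intro ha
    obtain ⟨k, hk, rfl⟩ := exists_enumerate_eq ha
    exact ⟨k, by omega, rfl⟩

lemma armTableau_toArm (hd : d + 3 ≤ n) (hd1 : 1 ≤ d) {T : ℕ × ℕ → ℕ}
    (hT : IsSYT ((d + 1) :: 2 :: List.replicate (n - d - 3) 1) T) :
    toArm d T ∈ goodArms n d ∧ armTableau n (toArm d T) = T := by
  obtain ⟨hT0, hTn, hTinj, hTrow, hTcol⟩ := hT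
  have hsum : ((d + 1) :: 2 :: List.replicate (n - d - 3) 1).sum = n := by
    simp
    omega
  rw [hsum] at hTn
  have hc : IsCell ((d + 1) :: 2 :: List.replicate (n - d - 3) 1) (0, 0) :=
    (isCell_iff hd).2 (Or.inl rfl)
  have hr (k : ℕ) (hk : k < d) : IsCell ((d + 1) :: 2 :: List.replicate (n - d - 3) 1) (0, k + 1) :=
    (isCell_iff hd).2 (Or.inr (Or.inl ⟨k, hk, rfl⟩))
  have hl (k : ℕ) (hk : k < n - d - 2) :
      IsCell ((d + 1) :: 2 :: List.replicate (n - d - 3) 1) (k + 1, 0) :=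
    (isCell_iff hd).2 (Or.inr (Or.inr (Or.inl ⟨k, hk, rfl⟩)))
  have hi : IsCell ((d + 1) :: 2 :: List.replicate (n - d - 3) 1) (1, 1) :=
    (isCell_iff hd).2 (Or.inr (Or.inr (Or.inr rfl)))
  have hr2 (k : ℕ) (hk : k < d) : 2 ≤ T (0, k + 1) := by
    have h1 := hTrow 0 k (hr k hk)
    rcases k with _ | k
    · have := hTn _ hc
      omega
    · have := hTn _ (hr k (by omega))
      omega
  have hl2 (k : ℕ) (hk : k < n - d - 2) : 2 ≤ T (k + 1, 0) := by
    have h1 := hTcol k 0 (hl k hk)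
    rcases k with _ | k
    · have := hTn _ hc
      omega
    · have := hTn _ (hl k (by omega))
      omega
  have hi2 : T (1, 0) < T (1, 1) := hTrow 1 0 hi
  have hi2' : T (0, 1) < T (1, 1) := hTcol 0 1 hi
  have hl0 : 2 ≤ T (1, 0) := hl2 0 (by omega)
  have harm : toArm d T ∈ arms n d := by
    refine mem_arms.2 ⟨Finset.mem_Icc.2 ⟨by dsimp only [toArm]; omega, (hTn _ hi).2⟩, ?_, ?_⟩
    · intro a ha
      obtain ⟨k, hk, rfl⟩ := Finset.mem_image.1 ha
      rw [Finset.mem_range] at hk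
      refine Finset.mem_erase.2 ⟨fun h => ?_, Finset.mem_Icc.2 ⟨hr2 k hk, (hTn _ (hr k hk)).2⟩⟩
      simpa using hTinj _ _ (hr k hk) hi h
    · rw [toArm, Finset.card_image_of_injOn, Finset.card_range]
      intro k hk k' hk' h
      simpa using hTinj _ _ (hr k (by simpa using hk)) (hr k' (by simpa using hk')) h
  have hleg (k : ℕ) (hk : k < n - d - 2) : T (k + 1, 0) ∈ leg n (toArm d T) := by
    rw [leg, Finset.mem_sdiff, Finset.mem_erase, Finset.mem_Icc]
    refine ⟨⟨fun h => ?_, hl2 k hk, (hTn _ (hl k hk)).2⟩, fun h => ?_⟩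
    · simpa using hTinj _ _ (hl k hk) hi h
    · obtain ⟨k', hk', h⟩ := Finset.mem_image.1 h
      simpa using hTinj _ _ (hr k' (by simpa using hk')) (hl k hk) h
  have hrow (k : ℕ) (hk : k < d) : T (0, k + 1) ∈ (toArm d T).2 :=
    Finset.mem_image.2 ⟨k, Finset.mem_range.2 hk, rfl⟩
  have hA := (mem_arms.1 harm).2.2
  have hB := card_leg harm
  have hrow' (k : ℕ) (hk : k < d) : T (0, k + 1) = enumerate (toArm d T).2 k :=
    eq_enumerate (f := fun k => T (0, k + 1)) (fun k hk => hrow k (by omega))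
      (fun k hk => hTrow 0 (k + 1) (hr (k + 1) (by omega))) (by omega)
  have hcol' (k : ℕ) (hk : k < n - d - 2) : T (k + 1, 0) = enumerate (leg n (toArm d T)) k :=
    eq_enumerate (f := fun k => T (k + 1, 0)) (fun k hk => hleg k (by omega))
      (fun k hk => hTcol (k + 1) 0 (hl (k + 1) (by omega))) (by omega)
  refine ⟨Finset.mem_filter.2 ⟨harm, ⟨_, hrow 0 hd1, hi2'⟩, ⟨_, hleg 0 (by omega), hi2⟩⟩, ?_⟩
  ext c
  by_cases hcell : IsCell ((d + 1) :: 2 :: List.replicate (n - d - 3) 1) c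
  · rcases (isCell_iff hd).1 hcell with rfl | ⟨k, hk, rfl⟩ | ⟨k, hk, rfl⟩ | rfl
    · rw [armTableau_corner]
      obtain ⟨h1, h2⟩ := hTn _ hc
      by_contra hne
      by_cases hx : T (0, 0) = T (1, 1)
      · simpa using hTinj _ _ hc hi hx
      by_cases ha : T (0, 0) ∈ (toArm d T).2
      · obtain ⟨k, hk, h⟩ := Finset.mem_image.1 ha
        simpa using hTinj _ _ (hr k (by simpa using hk)) hc h
      · have hb : T (0, 0) ∈ leg n (toArm d T) := by
          rw [leg, Finset.mem_sdiff, Finset.mem_erase, Finset.mem_Icc]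
          exact ⟨⟨hx, by omega, h2⟩, ha⟩
        obtain ⟨k, hk, h⟩ := exists_enumerate_eq hb
        rw [← hcol' k (by omega)] at h
        simpa using hTinj _ _ (hl k (by omega)) hc h
    · rw [armTableau_row, hrow' k hk]
    · rw [armTableau_col, hcol' k hk]
    · rfl
  · rw [hT0 c hcell, armTableau_of_not_isCell hd harm hcell]

lemma sytCount_eq_card_goodArms (hd : d + 3 ≤ n) (hd1 : 1 ≤ d) :
    sytCount ((d + 1) :: 2 :: List.replicate (n - d - 3) 1) = (goodArms n d).card := by
  rw [sytCount, ← Nat.card_eq_finsetCard]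
  exact Nat.card_congr
    { toFun := fun T => ⟨toArm d T.1, (armTableau_toArm hd hd1 T.2).1⟩
      invFun := fun p => ⟨armTableau n p.1, isSYT_armTableau hd hd1 p.2⟩
      left_inv := fun T => Subtype.ext (armTableau_toArm hd hd1 T.2).2
      right_inv := fun p => Subtype.ext (toArm_armTableau (Finset.mem_filter.1 p.2).1) }

lemma card_arms : (arms n d).card = (n - 1) * (n - 2).choose d := by
  rw [arms, Finset.card_sigma, Finset.sum_congr rfl (g := fun _ => (n - 2).choose d)]
  · simp
  · intro x hx
    rw [Finset.card_powersetCard, Finset.card_erase_of_mem hx, Nat.card_Icc]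
    congr 1

lemma card_filter_forall_lt_arm :
    ((arms n d).filter fun p => ∀ a ∈ p.2, p.1 < a).card = (n - 1).choose (d + 1) := by
  have hs : (Finset.Icc 2 n).card = n - 1 := by
    rw [Nat.card_Icc]
    omega
  rw [← hs, ← Finset.card_powersetCard]
  refine Finset.card_bij (fun p _ => insert p.1 p.2) ?_ ?_ ?_
  · intro p hp
    obtain ⟨hp, -⟩ := Finset.mem_filter.1 hp
    obtain ⟨hx, hA, hd⟩ := mem_arms.1 hp
    refine Finset.mem_powersetCard.2 ⟨Finset.insert_subset hx fun a ha =>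
      Finset.mem_of_mem_erase (hA ha), ?_⟩
    rw [Finset.card_insert_of_notMem (fun h => Finset.notMem_erase _ _ (hA h)), hd]
  · rintro ⟨x, A⟩ hp ⟨y, B⟩ hq h
    obtain ⟨-, hxA⟩ := Finset.mem_filter.1 hp
    obtain ⟨-, hyB⟩ := Finset.mem_filter.1 hq
    dsimp only at h hxA hyB
    have hxy : x = y := by
      have h1 : x ∈ insert y B := h ▸ Finset.mem_insert_self x A
      have h2 : y ∈ insert x A := h ▸ Finset.mem_insert_self y B
      rcases Finset.mem_insert.1 h1 with h1 | h1
      · exact h1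
      rcases Finset.mem_insert.1 h2 with h2 | h2
      · exact h2.symm
      exact absurd (hxA _ h2) (hyB _ h1).not_gt
    subst hxy
    have hx1 : x ∉ A := fun h => lt_irrefl _ (hxA x h)
    have hx2 : x ∉ B := fun h => lt_irrefl _ (hyB x h)
    rw [← Finset.erase_insert hx1, h, Finset.erase_insert hx2]
  · intro S hS
    obtain ⟨hS, hcard⟩ := Finset.mem_powersetCard.1 hS
    have hne : S.Nonempty := Finset.card_pos.1 (by omega)
    have hmin := S.min'_mem hne
    refine ⟨⟨S.min' hne, S.erase (S.min' hne)⟩, Finset.mem_filter.2 ⟨mem_arms.2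
      ⟨hS hmin, Finset.erase_subset_erase _ hS, ?_⟩, fun a ha => ?_⟩, Finset.insert_erase hmin⟩
    · rw [Finset.card_erase_of_mem hmin, hcard]
      rfl
    · exact S.min'_lt_of_mem_erase_min' hne ha

lemma card_filter_forall_lt_leg (hd : d + 2 ≤ n) :
    ((arms n d).filter fun p => ∀ b ∈ leg n p, p.1 < b).card = (n - 1).choose d := by
  have hs : (Finset.Icc 2 n).card = n - 1 := by
    rw [Nat.card_Icc]
    omega
  rw [← hs, ← Finset.card_powersetCard]
  refine Finset.card_bij (fun p _ => p.2) ?_ ?_ ?_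
  · intro p hp
    obtain ⟨hp, -⟩ := Finset.mem_filter.1 hp
    obtain ⟨hx, hA, hd⟩ := mem_arms.1 hp
    exact Finset.mem_powersetCard.2 ⟨hA.trans (Finset.erase_subset _ _), hd⟩
  · rintro ⟨x, A⟩ hp ⟨y, B⟩ hq h
    obtain ⟨hp, hxA⟩ := Finset.mem_filter.1 hp
    obtain ⟨hq, hyB⟩ := Finset.mem_filter.1 hq
    dsimp only at h
    subst h
    obtain ⟨hx, hxA', -⟩ := mem_arms.1 hp
    obtain ⟨hy, hyA', -⟩ := mem_arms.1 hq
    dsimp only [leg] at *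
    have hxn : x ∉ A := fun h => Finset.notMem_erase _ _ (hxA' h)
    have hyn : y ∉ A := fun h => Finset.notMem_erase _ _ (hyA' h)
    by_contra hne
    have hxy : x ≠ y := fun h => hne (by rw [h])
    have h1 := hxA y (Finset.mem_sdiff.2 ⟨Finset.mem_erase.2 ⟨hxy.symm, hy⟩, hyn⟩)
    have h2 := hyB x (Finset.mem_sdiff.2 ⟨Finset.mem_erase.2 ⟨hxy, hx⟩, hxn⟩)
    omega
  · intro A hA
    obtain ⟨hA, hcard⟩ := Finset.mem_powersetCard.1 hA
    have hne : (Finset.Icc 2 n \ A).Nonempty := by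
      rw [← Finset.card_pos, Finset.card_sdiff_of_subset hA]
      omega
    have hmin := Finset.mem_sdiff.1 (Finset.min'_mem _ hne)
    refine ⟨⟨Finset.min' _ hne, A⟩, Finset.mem_filter.2 ⟨mem_arms.2
      ⟨hmin.1, fun a ha => Finset.mem_erase.2 ⟨?_, hA ha⟩, hcard⟩, fun b hb => ?_⟩, rfl⟩
    · rintro rfl
      exact hmin.2 ha
    · dsimp only [leg] at hb ⊢
      rw [Finset.mem_sdiff, Finset.mem_erase] at hb
      exact lt_of_le_of_ne (Finset.min'_le _ _ (Finset.mem_sdiff.2 ⟨hb.1.2, hb.2⟩)) hb.1.1.symm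

lemma card_filter_forall_lt_both (hn : 2 ≤ n) :
    ((arms n d).filter fun p => (∀ a ∈ p.2, p.1 < a) ∧ ∀ b ∈ leg n p, p.1 < b).card =
      (n - 2).choose d := by
  have h2 : 2 ∈ Finset.Icc 2 n := Finset.mem_Icc.2 ⟨le_rfl, hn⟩
  have hs : ((Finset.Icc 2 n).erase 2).card = n - 2 := by
    rw [Finset.card_erase_of_mem h2, Nat.card_Icc]
    omega
  rw [← hs, ← Finset.card_powersetCard]
  have key (p : (_ : ℕ) × Finset ℕ) (hp : p ∈ (arms n d).filter fun p =>
      (∀ a ∈ p.2, p.1 < a) ∧ ∀ b ∈ leg n p, p.1 < b) : p.1 = 2 := by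
    obtain ⟨hp, hA, hB⟩ := Finset.mem_filter.1 hp
    have hx := Finset.mem_Icc.1 (mem_arms.1 hp).1
    by_contra hne
    by_cases h : 2 ∈ p.2
    · have := hA 2 h
      omega
    · have := hB 2 (Finset.mem_sdiff.2 ⟨Finset.mem_erase.2 ⟨fun h => hne h.symm, h2⟩, h⟩)
      omega
  refine Finset.card_bij (fun p _ => p.2) ?_ ?_ ?_
  · intro p hp
    have hp2 := key p hp
    obtain ⟨hx, hA, hd⟩ := mem_arms.1 (Finset.mem_filter.1 hp).1
    rw [hp2] at hA
    exact Finset.mem_powersetCard.2 ⟨hA, hd⟩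
  · intro p hp q hq h
    exact Sigma.ext ((key p hp).trans (key q hq).symm) (heq_of_eq h)
  · intro A hA
    obtain ⟨hA, hcard⟩ := Finset.mem_powersetCard.1 hA
    have hlt (a : ℕ) (ha : a ∈ (Finset.Icc 2 n).erase 2) : 2 < a := by
      rw [Finset.mem_erase, Finset.mem_Icc] at ha
      omega
    exact ⟨⟨2, A⟩, Finset.mem_filter.2 ⟨mem_arms.2 ⟨h2, hA, hcard⟩, fun a ha => hlt a (hA ha),
      fun b hb => hlt b (Finset.mem_sdiff.1 hb).1⟩, rfl⟩

lemma card_goodArms_add (hd : d + 3 ≤ n) :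
    (goodArms n d).card + n.choose (d + 1) = n * (n - 2).choose d := by
  have hsplit := Finset.card_filter_add_card_filter_not (s := arms n d)
    (fun p => (∃ a ∈ p.2, a < p.1) ∧ ∃ b ∈ leg n p, b < p.1)
  have hor : ((arms n d).filter fun p => ¬ ((∃ a ∈ p.2, a < p.1) ∧ ∃ b ∈ leg n p, b < p.1)) =
      ((arms n d).filter fun p => ∀ a ∈ p.2, p.1 < a) ∪
        ((arms n d).filter fun p => ∀ b ∈ leg n p, p.1 < b) := by
    rw [← Finset.filter_or]
    refine Finset.filter_congr fun p hp => ?_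
    obtain ⟨-, hA, -⟩ := mem_arms.1 hp
    have h1 (a : ℕ) (ha : a ∈ p.2) : a ≠ p.1 := Finset.ne_of_mem_erase (hA ha)
    have h2 (b : ℕ) (hb : b ∈ leg n p) : b ≠ p.1 :=
      Finset.ne_of_mem_erase (Finset.mem_sdiff.1 hb).1
    rw [not_and_or]
    push Not
    refine or_congr (forall₂_congr fun a ha => ?_) (forall₂_congr fun b hb => ?_)
    · have := h1 a ha
      omega
    · have := h2 b hb
      omega
  have hunion := Finset.card_union_add_card_inter
    ((arms n d).filter fun p => ∀ a ∈ p.2, p.1 < a)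
    ((arms n d).filter fun p => ∀ b ∈ leg n p, p.1 < b)
  rw [← Finset.filter_and, card_filter_forall_lt_both (by omega), card_filter_forall_lt_arm,
    card_filter_forall_lt_leg (by omega)] at hunion
  rw [hor, card_arms] at hsplit
  obtain ⟨m, rfl⟩ : ∃ m, n = m + 2 := ⟨n - 2, by omega⟩
  have hp : (m + 2).choose (d + 1) = (m + 1).choose d + (m + 1).choose (d + 1) :=
    Nat.choose_succ_succ (m + 1) d
  simp only [show m + 2 - 1 = m + 1 by omega, show m + 2 - 2 = m by omega] at hunion hsplit ⊢
  have : (m + 2) * m.choose d = (m + 1) * m.choose d + m.choose d := by ring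
  rw [goodArms]
  omega

end Tableaux

/-- For `n ≥ 5` and `1 ≤ d ≤ n - 3`, the `d`-th total Betti number of `R/Jₙ`
(the rank of the `d`-th module in any minimal free resolution of `R/Jₙ`) equals the
number of standard Young tableaux of shape `(d+1, 2, 1^(n-d-3))`. -/
theorem betti_eq_syt (K : Type) [Field K] (n d : ℕ) (hn : 5 ≤ n)
    (hd1 : 1 ≤ d) (hd2 : d ≤ n - 3)
    (F : MinimalFreeResolution n K (MvPolynomial (Fin n) K ⧸ cycleIdeal n K)) :
    F.b d = sytCount ((d + 1) :: 2 :: List.replicate (n - d - 3) 1) := by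
  obtain ⟨d, rfl⟩ : ∃ e, d = e + 1 := ⟨d - 1, by omega⟩
  obtain ⟨m, rfl⟩ : ∃ m, n = m + 2 := ⟨n - 2, by omega⟩
  have hlength := length_koszulHomology_cycle (K := K) hn (d := d) (by omega)
  rw [F.length_koszulHomology] at hlength
  norm_cast at hlength
  have hgood : (goodArms (m + 2) (d + 1)).card + (m + 2).choose (d + 2) =
      (m + 2) * m.choose (d + 1) :=
    card_goodArms_add (by omega)
  have hpascal : (m + 1).choose (d + 2) = m.choose (d + 1) + m.choose (d + 2) :=
    Nat.choose_succ_succ m (d + 1)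
  simp only [Nat.add_sub_cancel, show m + 2 - 1 = m + 1 by omega] at hlength
  rw [hpascal, mul_add] at hlength
  rw [sytCount_eq_card_goodArms (by omega) (by omega)]
  omega
end
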